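/- arXiv:1507.00124 — 4 statements merged into one kernel-verified Lean document; each statement's English description precedes it below -/
import Mathlib

section
/- No involutive Lie algebra automorphism σ (σ ∘ σ = id) of the product Lie algebra sl₂(ℝ) × so₃(ℝ) has a fixed-point subalgebra {x : σ(x) = x} of dimension 3 over ℝ. -/
open Matrix

/-- The componentwise Lie bracket on a product of Lie rings. -/
instance prodLieRing (L M : Type*) [LieRing L] [LieRing M] : LieRing (L × M) where
  bracket p q := (⁅p.1, q.1⁆, ⁅p.2, q.2⁆)
  add_lie x y z := by
    show (⁅x.1 + y.1, z.1⁆, ⁅x.2 + y.2, z.2⁆)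
      = (⁅x.1, z.1⁆, ⁅x.2, z.2⁆) + (⁅y.1, z.1⁆, ⁅y.2, z.2⁆)
    simp [add_lie, Prod.ext_iff]
  lie_add x y z := by
    show (⁅x.1, y.1 + z.1⁆, ⁅x.2, y.2 + z.2⁆)
      = (⁅x.1, y.1⁆, ⁅x.2, y.2⁆) + (⁅x.1, z.1⁆, ⁅x.2, z.2⁆)
    simp [lie_add, Prod.ext_iff]
  lie_self x := by
    show (⁅x.1, x.1⁆, ⁅x.2, x.2⁆) = (0 : L × M)
    simp [Prod.ext_iff]
  leibniz_lie x y z := by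
    show (⁅x.1, ⁅y.1, z.1⁆⁆, ⁅x.2, ⁅y.2, z.2⁆⁆)
      = (⁅⁅x.1, y.1⁆, z.1⁆, ⁅⁅x.2, y.2⁆, z.2⁆) + (⁅y.1, ⁅x.1, z.1⁆⁆, ⁅y.2, ⁅x.2, z.2⁆⁆)
    simp [Prod.ext_iff]

/-- The product of two Lie algebras, with the componentwise bracket. -/
instance prodLieAlgebra (R L M : Type*) [CommRing R] [LieRing L] [LieRing M]
    [LieAlgebra R L] [LieAlgebra R M] : LieAlgebra R (L × M) where
  lie_smul t x y := by
    show (⁅x.1, t • y.1⁆, ⁅x.2, t • y.2⁆) = t • (⁅x.1, y.1⁆, ⁅x.2, y.2⁆)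
    simp [Prod.ext_iff]

attribute [local instance 100] LieRing.ofAssociativeRing

/-- `sl₂(ℝ)`, the Lie algebra of traceless real 2×2 matrices. -/
abbrev sl2R : LieSubalgebra ℝ (Matrix (Fin 2) (Fin 2) ℝ) :=
  LieAlgebra.SpecialLinear.sl (Fin 2) ℝ


/-- `so₃(ℝ)`, the Lie algebra of skew-symmetric real 3×3 matrices. -/
abbrev so3R : LieSubalgebra ℝ (Matrix (Fin 3) (Fin 3) ℝ) :=
  LieAlgebra.Orthogonal.so (Fin 3) ℝ

/-!
On a three-dimensional Lie algebra the bracket factors through a linear map `B : Λ² L → L`, and an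
endomorphism `φ` satisfies `φ ∘ B = B ∘ Λ² φ`. If `L` is perfect then `B` is invertible, so
`det φ = det (Λ² φ) = (det φ) ^ 2`.

An element of `so₃(ℝ)` has skew adjoint action, which rules out nonzero real eigenvalues, so every
homomorphism `sl₂(ℝ) → so₃(ℝ)` vanishes. Hence an automorphism of `sl₂(ℝ) × so₃(ℝ)` is block
triangular, and its determinant is `1` by the previous paragraph. Since an involution has
determinant `(-1) ^ k`, where `k` is the codimension of its fixed space, the fixed space is
even-dimensional.
-/

open Module LieAlgebra
open LieAlgebra.SpecialLinear (sl singleSubSingle sl_bracket)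
open LieAlgebra.Orthogonal (so mem_so)

section Determinant

theorem det_eq_mul_of_snd_comp_inl_eq_zero {R V W : Type*} [CommRing R]
    [AddCommGroup V] [Module R V] [Module.Free R V] [Module.Finite R V]
    [AddCommGroup W] [Module R W] [Module.Free R W] [Module.Finite R W]
    (f : V × W →ₗ[R] V × W)
    (hf : LinearMap.snd R V W ∘ₗ f ∘ₗ LinearMap.inl R V W = 0) :
    f.det = (LinearMap.fst R V W ∘ₗ f ∘ₗ LinearMap.inl R V W).det *
      (LinearMap.snd R V W ∘ₗ f ∘ₗ LinearMap.inr R V W).det := by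
  classical
  let b := Free.chooseBasis R V
  let c := Free.chooseBasis R W
  have hblocks : LinearMap.toMatrix (b.prod c) (b.prod c) f = fromBlocks
      (LinearMap.toMatrix b b (LinearMap.fst R V W ∘ₗ f ∘ₗ LinearMap.inl R V W))
      (LinearMap.toMatrix c b (LinearMap.fst R V W ∘ₗ f ∘ₗ LinearMap.inr R V W))
      (LinearMap.toMatrix b c (LinearMap.snd R V W ∘ₗ f ∘ₗ LinearMap.inl R V W))
      (LinearMap.toMatrix c c (LinearMap.snd R V W ∘ₗ f ∘ₗ LinearMap.inr R V W)) := by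
    ext (i | i) (j | j) <;> simp [LinearMap.toMatrix_apply]
  rw [← LinearMap.det_toMatrix (b.prod c), hblocks, hf, map_zero, det_fromBlocks_zero₂₁,
    LinearMap.det_toMatrix, LinearMap.det_toMatrix]

variable {K V : Type*} [Field K] [AddCommGroup V] [Module K V] [Module.Finite K V]

theorem det_eq_neg_one_pow_of_involutive {σ : V →ₗ[K] V} (hσ : Function.Involutive σ) :
    σ.det = (-1) ^ finrank K (V ⧸ LinearMap.ker (σ - LinearMap.id)) := by
  set W := LinearMap.ker (σ - LinearMap.id)
  have mem_W (x : V) : x ∈ W ↔ σ x = x := by simp [W, sub_eq_zero]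
  have hW : W ≤ W.comap σ := fun x hx ↦ by
    rw [Submodule.mem_comap, (mem_W x).mp hx]
    exact hx
  have restrict_eq : σ.restrict hW = LinearMap.id := by
    ext x
    exact (mem_W x).mp x.2
  have mapQ_eq : W.mapQ W σ hW = -LinearMap.id := by
    ext x
    suffices σ x - -x ∈ W from (Submodule.Quotient.eq W).mpr this
    rw [mem_W, map_sub, map_neg, hσ x]
    abel
  rw [σ.det_eq_det_mul_det W hW, restrict_eq, mapQ_eq, LinearMap.det_id, one_mul,
    ← neg_one_smul K LinearMap.id, LinearMap.det_smul, LinearMap.det_id, mul_one]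

theorem even_finrank_ker_sub_id_of_involutive [NeZero (2 : K)] {σ : V →ₗ[K] V}
    (hσ : Function.Involutive σ) (hdet : σ.det = 1) (hV : Even (finrank K V)) :
    Even (finrank K (LinearMap.ker (σ - LinearMap.id))) := by
  have neg_one_ne_one : (-1 : K) ≠ 1 := fun h ↦ two_ne_zero (α := K) (by linear_combination -h)
  rw [det_eq_neg_one_pow_of_involutive hσ, neg_one_pow_eq_one_iff_even neg_one_ne_one] at hdet
  rw [← Submodule.finrank_quotient_add_finrank (LinearMap.ker (σ - LinearMap.id))] at hV
  exact (Nat.even_add.mp hV).mp hdet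

end Determinant

section CrossProduct

variable {R : Type*} [CommRing R]

theorem mulVec_cross_mulVec (A : Matrix (Fin 3) (Fin 3) R) (v w : Fin 3 → R) :
    (A *ᵥ v) ⨯₃ (A *ᵥ w) = A.adjugateᵀ *ᵥ (v ⨯₃ w) := by
  ext i
  fin_cases i <;>
    simp [cross_apply, adjugate_fin_three, mulVec, vec3_dotProduct] <;> ring

theorem span_range_cross_eq_top :
    Submodule.span R (Set.range fun p : (Fin 3 → R) × (Fin 3 → R) ↦ p.1 ⨯₃ p.2) = ⊤ := by
  rw [eq_top_iff, ← (Pi.basisFun R (Fin 3)).span_eq]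
  refine Submodule.span_mono ?_
  rintro _ ⟨i, rfl⟩
  refine ⟨(Pi.single (i + 1) 1, Pi.single (i + 2) 1), ?_⟩
  ext j
  fin_cases i <;> fin_cases j <;> simp [cross_apply]

end CrossProduct

section RankThree

variable {R L : Type*} [CommRing R] [LieRing L] [LieAlgebra R L]

/-- The linear map through which the Lie bracket of a Lie algebra with basis `b₀, b₁, b₂` factors,
once `Λ² L` is identified with `R³` by the cross product of coordinate vectors. -/
noncomputable def lieOfCross (b : Basis (Fin 3) R L) : (Fin 3 → R) →ₗ[R] L :=
  Fintype.linearCombination R ![⁅b 1, b 2⁆, ⁅b 2, b 0⁆, ⁅b 0, b 1⁆]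

theorem lieOfCross_cross (b : Basis (Fin 3) R L) (x y : L) :
    lieOfCross b (b.equivFun x ⨯₃ b.equivFun y) = ⁅x, y⁆ := by
  conv_rhs => rw [← b.sum_equivFun x, ← b.sum_equivFun y]
  simp only [lieOfCross, Fintype.linearCombination_apply, Fin.sum_univ_three, cross_apply,
    add_lie, lie_add, smul_lie, lie_smul, lie_self, cons_val]
  rw [← lie_skew (b 1) (b 0), ← lie_skew (b 2) (b 1), ← lie_skew (b 0) (b 2)]
  module

theorem lieOfCross_surjective (b : Basis (Fin 3) R L)
    (hL : ⁅(⊤ : LieIdeal R L), (⊤ : LieIdeal R L)⁆ = ⊤) :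
    Function.Surjective (lieOfCross b) := by
  rw [← LinearMap.range_eq_top, eq_top_iff, ← LieSubmodule.top_toSubmodule (R := R) (L := L), ← hL,
    LieSubmodule.lieIdeal_oper_eq_linear_span', Submodule.span_le]
  rintro _ ⟨x, -, y, -, rfl⟩
  exact ⟨_, lieOfCross_cross b x y⟩

theorem map_lieOfCross (b : Basis (Fin 3) R L) (φ : L →ₗ⁅R⁆ L) (u : Fin 3 → R) :
    φ (lieOfCross b u) =
      lieOfCross b ((LinearMap.toMatrix b b (φ : L →ₗ[R] L)).adjugateᵀ *ᵥ u) := by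
  set A := LinearMap.toMatrix b b (φ : L →ₗ[R] L)
  suffices (φ : L →ₗ[R] L) ∘ₗ lieOfCross b = lieOfCross b ∘ₗ A.adjugateᵀ.mulVecLin from
    LinearMap.congr_fun this u
  refine LinearMap.ext_on span_range_cross_eq_top ?_
  rintro _ ⟨⟨v, w⟩, rfl⟩
  obtain ⟨x, rfl⟩ := b.equivFun.surjective v
  obtain ⟨y, rfl⟩ := b.equivFun.surjective w
  have coord (z : L) : A *ᵥ b.equivFun z = b.equivFun (φ z) :=
    LinearMap.toMatrix_mulVec_repr b b (φ : L →ₗ[R] L) z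
  calc φ (lieOfCross b (b.equivFun x ⨯₃ b.equivFun y))
      = ⁅φ x, φ y⁆ := by rw [lieOfCross_cross, LieHom.map_lie]
    _ = lieOfCross b ((A *ᵥ b.equivFun x) ⨯₃ (A *ᵥ b.equivFun y)) := by
      rw [coord, coord, lieOfCross_cross]
    _ = lieOfCross b (A.adjugateᵀ *ᵥ (b.equivFun x ⨯₃ b.equivFun y)) := by
      rw [mulVec_cross_mulVec]

theorem isIdempotentElem_det_of_lie_top_eq_top (b : Basis (Fin 3) R L)
    (hL : ⁅(⊤ : LieIdeal R L), (⊤ : LieIdeal R L)⁆ = ⊤) (φ : L →ₗ⁅R⁆ L) :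
    IsIdempotentElem (φ : L →ₗ[R] L).det := by
  set A := LinearMap.toMatrix b b (φ : L →ₗ[R] L) with hA
  have : Module.Finite R L := .of_basis b
  let B : End R L := lieOfCross b ∘ₗ b.equivFun
  have isUnit_det_B : IsUnit B.det := by
    have hB : Function.Surjective B := (lieOfCross_surjective b hL).comp b.equivFun.surjective
    exact ((End.isUnit_iff B).mpr
      (OrzechProperty.bijective_of_surjective_endomorphism B hB)).map LinearMap.det
  have intertwine : (φ : L →ₗ[R] L) ∘ₗ B = B ∘ₗ toLin b b A.adjugateᵀ := by
    ext x
    have coord : b.equivFun (toLin b b A.adjugateᵀ x) = A.adjugateᵀ *ᵥ b.equivFun x := by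
      simpa using (LinearMap.toMatrix_mulVec_repr b b (toLin b b A.adjugateᵀ) x).symm
    exact (map_lieOfCross b φ _).trans (congrArg (lieOfCross b) coord.symm)
  have det_sq : A.det * B.det = B.det * A.det ^ 2 := by
    have := congrArg LinearMap.det intertwine
    rwa [LinearMap.det_comp, LinearMap.det_comp, LinearMap.det_toLin, det_transpose,
      det_adjugate, ← LinearMap.det_toMatrix b] at this
  rw [← LinearMap.det_toMatrix b, ← hA]
  exact isUnit_det_B.mul_left_cancel (by linear_combination -det_sq)

end RankThree

section SpecialLinear

theorem finrank_sl_add_one {K n : Type*} [Field K] [Fintype n] [DecidableEq n] [Nonempty n] :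
    finrank K (sl n K) + 1 = Fintype.card n ^ 2 := by
  have trace_surjective : Function.Surjective (traceLinearMap n K K) := fun a ↦ by
    obtain ⟨i⟩ := ‹Nonempty n›
    exact ⟨Matrix.single i i a, trace_single_eq_same i a⟩
  have := (traceLinearMap n K K).finrank_range_add_finrank_ker
  rw [LinearMap.range_eq_top.mpr trace_surjective, finrank_top, finrank_self,
    finrank_matrix, finrank_self] at this
  rw [add_comm, sq, ← mul_one (_ * _)]
  exact this

theorem finrank_sl_two {K : Type*} [Field K] : finrank K (sl (Fin 2) K) = 3 := by
  simpa using finrank_sl_add_one (K := K) (n := Fin 2)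

theorem isSl2Triple_sl {R n : Type*} [CommRing R] [Nontrivial R] [Fintype n] [DecidableEq n]
    {i j : n} (hij : i ≠ j) : IsSl2Triple (singleSubSingle i j (1 : R))
      (SpecialLinear.single i j hij 1) (SpecialLinear.single j i hij.symm 1) where
  h_ne_zero h := by simpa [hij, hij.symm] using congrFun₂ (congrArg Subtype.val h) i i
  lie_e_f := by
    ext1
    simp [sl_bracket, -LieSubalgebra.coe_bracket]
  lie_h_e_nsmul := by
    ext1
    simp [sl_bracket, sub_mul, mul_sub, hij.symm, two_smul, -LieSubalgebra.coe_bracket]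
  lie_h_f_nsmul := by
    ext1
    simp [sl_bracket, sub_eq_add_neg, add_mul, mul_add, hij, two_smul,
      -LieSubalgebra.coe_bracket]

theorem sl_two_eq_sum {R : Type*} [CommRing R] (x : sl (Fin 2) R) :
    x = x.1 0 0 • singleSubSingle 0 1 1 + x.1 0 1 • SpecialLinear.single 0 1 zero_ne_one 1 +
      x.1 1 0 • SpecialLinear.single 1 0 one_ne_zero 1 := by
  have htrace : x.1 0 0 + x.1 1 1 = 0 := (trace_fin_two x.1).symm.trans x.2
  ext i j
  fin_cases i <;> fin_cases j <;> simp
  linear_combination htrace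

theorem lie_top_eq_top_sl_two {K : Type*} [Field K] [NeZero (2 : K)] :
    ⁅(⊤ : LieIdeal K (sl (Fin 2) K)), (⊤ : LieIdeal K (sl (Fin 2) K))⁆ = ⊤ := by
  set D := ⁅(⊤ : LieIdeal K (sl (Fin 2) K)), (⊤ : LieIdeal K (sl (Fin 2) K))⁆
  have lie_mem (x y : sl (Fin 2) K) : ⁅x, y⁆ ∈ D :=
    LieSubmodule.lie_mem_lie (LieSubmodule.mem_top x) (LieSubmodule.mem_top y)
  have mem_of_two_smul_mem {x : sl (Fin 2) K} (hx : (2 : K) • x ∈ D) : x ∈ D := by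
    simpa [smul_smul, two_ne_zero] using D.smul_mem (2⁻¹ : K) hx
  have t := isSl2Triple_sl (R := K) (zero_ne_one (α := Fin 2))
  have h_mem := t.lie_e_f ▸ lie_mem _ _
  have e_mem := mem_of_two_smul_mem (t.lie_h_e_smul K ▸ lie_mem _ _)
  have f_mem := mem_of_two_smul_mem (neg_mem_iff.mp (t.lie_lie_smul_f K ▸ lie_mem _ _))
  refine eq_top_iff.mpr fun x _ ↦ ?_
  rw [sl_two_eq_sum x]
  exact add_mem (add_mem (D.smul_mem _ h_mem) (D.smul_mem _ e_mem)) (D.smul_mem _ f_mem)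

end SpecialLinear

section Orthogonal

variable {K n : Type*} [Field K] [LinearOrder K] [IsStrictOrderedRing K] [Fintype n]
  [DecidableEq n]

theorem eq_zero_of_lie_eq_smul_so {x y : so n K} {c : K} (hc : c ≠ 0) (h : ⁅x, y⁆ = c • y) :
    y = 0 := by
  have hy : y.1ᵀ = -y.1 := (mem_so n K y.1).mp y.2
  have hxy : x.1 * y.1 - y.1 * x.1 = c • y.1 := congrArg Subtype.val h
  have trace_lie_mul : trace ((x.1 * y.1 - y.1 * x.1) * y.1) = 0 := by
    rw [Matrix.sub_mul, trace_sub, Matrix.mul_assoc y.1, trace_mul_comm y.1, sub_self]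
  have trace_sq : trace (y.1ᵀ * y.1) = 0 := by
    rw [hxy, Matrix.smul_mul, trace_smul, smul_eq_mul, mul_eq_zero_iff_left hc] at trace_lie_mul
    rw [hy, Matrix.neg_mul, trace_neg, trace_lie_mul, neg_zero]
  rwa [← vec_dotProduct_vec, dotProduct_self_eq_zero, vec_eq_zero_iff,
    ZeroMemClass.coe_eq_zero] at trace_sq

theorem lieHom_sl_two_so_eq_zero (φ : sl (Fin 2) K →ₗ⁅K⁆ so n K) : φ = 0 := by
  have t := isSl2Triple_sl (R := K) (zero_ne_one (α := Fin 2))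
  have map_e : φ (SpecialLinear.single 0 1 zero_ne_one 1) = 0 :=
    eq_zero_of_lie_eq_smul_so (two_ne_zero (α := K)) <| by
      rw [← φ.map_lie, t.lie_h_e_smul K, map_smul]
  have map_f : φ (SpecialLinear.single 1 0 one_ne_zero 1) = 0 :=
    eq_zero_of_lie_eq_smul_so (neg_ne_zero.mpr (two_ne_zero (α := K))) <| by
      rw [← φ.map_lie, t.lie_lie_smul_f K, ← neg_smul, map_smul]
  have map_h : φ (singleSubSingle 0 1 1) = 0 := by
    rw [← t.lie_e_f, φ.map_lie, map_e, zero_lie]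
  ext1 x
  rw [sl_two_eq_sum x]
  simp [map_e, map_f, map_h]

end Orthogonal

section OrthogonalThree

/-- The hat map, sending `v` to the matrix of `w ↦ v ⨯₃ w`. -/
noncomputable def crossToSo (R : Type*) [CommRing R] : (Fin 3 → R) →ₗ[R] so (Fin 3) R :=
  (LinearMap.toMatrix'.toLinearMap ∘ₗ crossProduct).codRestrict (so (Fin 3) R).toSubmodule
    fun v ↦ (mem_so (Fin 3) R _).mpr <| by
      ext i j
      fin_cases i <;> fin_cases j <;> simp [LinearMap.toMatrix'_apply, cross_apply]

theorem coe_crossToSo {R : Type*} [CommRing R] (v : Fin 3 → R) :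
    (crossToSo R v : Matrix (Fin 3) (Fin 3) R) = (crossProduct v).toMatrix' :=
  rfl

theorem crossToSo_cross {R : Type*} [CommRing R] (v w : Fin 3 → R) :
    crossToSo R (v ⨯₃ w) = ⁅crossToSo R v, crossToSo R w⁆ := by
  have cross_eq_lie : crossProduct (v ⨯₃ w) = crossProduct v * crossProduct w -
      crossProduct w * crossProduct v := LinearMap.ext (cross_cross v w)
  ext1
  rw [LieSubalgebra.coe_bracket, Ring.lie_def, coe_crossToSo, coe_crossToSo, coe_crossToSo,
    cross_eq_lie, map_sub, LinearMap.toMatrix'_mul, LinearMap.toMatrix'_mul]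

variable (K : Type*) [Field K] [NeZero (2 : K)]

theorem crossToSo_bijective : Function.Bijective (crossToSo K) := by
  have hcoe (v : Fin 3 → K) : (crossToSo K v : Matrix (Fin 3) (Fin 3) K) =
      !![0, -v 2, v 1; v 2, 0, -v 0; -v 1, v 0, 0] := by
    ext i j
    fin_cases i <;> fin_cases j <;> simp [coe_crossToSo, LinearMap.toMatrix'_apply, cross_apply]
  refine ⟨fun v w h ↦ ?_, fun x ↦ ⟨![x.1 2 1, x.1 0 2, x.1 1 0], ?_⟩⟩
  · have entries := congrArg Subtype.val h
    rw [hcoe, hcoe] at entries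
    ext i
    fin_cases i
    · exact congrFun₂ entries 2 1
    · exact congrFun₂ entries 0 2
    · exact congrFun₂ entries 1 0
  · have skew (i j : Fin 3) : x.1 j i = -x.1 i j := congrFun₂ ((mem_so (Fin 3) K x.1).mp x.2) i j
    have diag (i : Fin 3) : x.1 i i = 0 :=
      (mul_eq_zero_iff_left (two_ne_zero (α := K))).mp (by linear_combination skew i i)
    ext i j
    rw [hcoe]
    fin_cases i <;> fin_cases j <;> simp [diag, skew 1 0, skew 2 1, skew 0 2]

theorem finrank_so_three : finrank K (so (Fin 3) K) = 3 := by
  rw [← (LinearEquiv.ofBijective _ (crossToSo_bijective K)).finrank_eq, finrank_fin_fun]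

theorem lie_top_eq_top_so_three :
    ⁅(⊤ : LieIdeal K (so (Fin 3) K)), (⊤ : LieIdeal K (so (Fin 3) K))⁆ = ⊤ := by
  rw [← LieSubmodule.toSubmodule_eq_top, LieSubmodule.lieIdeal_oper_eq_linear_span', eq_top_iff,
    ← LinearMap.range_eq_top.mpr (crossToSo_bijective K).surjective, LinearMap.range_eq_map,
    ← span_range_cross_eq_top, Submodule.map_span]
  refine Submodule.span_mono ?_
  rintro _ ⟨_, ⟨⟨v, w⟩, rfl⟩, rfl⟩
  exact ⟨_, trivial, _, trivial, (crossToSo_cross v w).symm⟩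

end OrthogonalThree

section Product

variable {K L M : Type*} [Field K] [LieRing L] [LieAlgebra K L] [LieRing M] [LieAlgebra K M]

theorem det_eq_one_of_lie_top_eq_top_of_lieHom_eq_zero
    (hL : finrank K L = 3) (hM : finrank K M = 3)
    (perfL : ⁅(⊤ : LieIdeal K L), (⊤ : LieIdeal K L)⁆ = ⊤)
    (perfM : ⁅(⊤ : LieIdeal K M), (⊤ : LieIdeal K M)⁆ = ⊤)
    (hLM : ∀ φ : L →ₗ⁅K⁆ M, φ = 0) (σ : (L × M) ≃ₗ⁅K⁆ (L × M)) :
    (σ.toLieHom : L × M →ₗ[K] L × M).det = 1 := by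
  have : Module.Finite K L := finite_of_finrank_pos (by lia)
  have : Module.Finite K M := finite_of_finrank_pos (by lia)
  have hσ := det_eq_mul_of_snd_comp_inl_eq_zero (σ.toLieHom : L × M →ₗ[K] L × M)
    (congrArg LieHom.toLinearMap
      (hLM ((LieHom.snd K L M).comp (σ.toLieHom.comp (LieHom.inl K L M)))))
  have idemL := isIdempotentElem_det_of_lie_top_eq_top (finBasisOfFinrankEq K L hL) perfL
    ((LieHom.fst K L M).comp (σ.toLieHom.comp (LieHom.inl K L M)))
  have idemM := isIdempotentElem_det_of_lie_top_eq_top (finBasisOfFinrankEq K M hM) perfM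
    ((LieHom.snd K L M).comp (σ.toLieHom.comp (LieHom.inr K L M)))
  have idem : IsIdempotentElem (σ.toLieHom : L × M →ₗ[K] L × M).det :=
    hσ ▸ idemL.mul idemM
  have det_ne_zero : (σ.toLieHom : L × M →ₗ[K] L × M).det ≠ 0 :=
    (LinearEquiv.isUnit_det' σ.toLinearEquiv).ne_zero
  exact (IsIdempotentElem.iff_eq_zero_or_one.mp idem).resolve_left det_ne_zero

theorem stmt_12_general [NeZero (2 : K)]
    (hL : finrank K L = 3) (hM : finrank K M = 3)
    (perfL : ⁅(⊤ : LieIdeal K L), (⊤ : LieIdeal K L)⁆ = ⊤)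
    (perfM : ⁅(⊤ : LieIdeal K M), (⊤ : LieIdeal K M)⁆ = ⊤)
    (hLM : ∀ φ : L →ₗ⁅K⁆ M, φ = 0)
    (σ : (L × M) ≃ₗ⁅K⁆ (L × M)) (hinv : ∀ x, σ (σ x) = x) :
    Even (finrank K (LinearMap.ker (σ.toLieHom.toLinearMap - LinearMap.id))) := by
  have : Module.Finite K L := finite_of_finrank_pos (by lia)
  have : Module.Finite K M := finite_of_finrank_pos (by lia)
  refine even_finrank_ker_sub_id_of_involutive hinv
    (det_eq_one_of_lie_top_eq_top_of_lieHom_eq_zero hL hM perfL perfM hLM σ) ?_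
  rw [finrank_prod, hL, hM]
  decide

end Product

/-- no involutive Lie algebra automorphism of `sl₂(ℝ) × so₃(ℝ)` has a
3-dimensional fixed-point subalgebra. -/
theorem stmt_12 (σ : (sl2R × so3R) ≃ₗ⁅ℝ⁆ (sl2R × so3R))
    (hinv : ∀ x, σ (σ x) = x) :
    Module.finrank ℝ
      (LinearMap.ker (σ.toLieHom.toLinearMap - LinearMap.id)) ≠ 3 := by
  have heven := stmt_12_general finrank_sl_two (finrank_so_three ℝ) lie_top_eq_top_sl_two
    (lie_top_eq_top_so_three ℝ) lieHom_sl_two_so_eq_zero σ hinv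
  exact fun hthree ↦ absurd (hthree ▸ heven) (by decide)
end

section
/- Let m be a real subspace of g with g = m ⊕ h (internal direct sum of real vector spaces). Then m satisfies ⁅⁅m, m⁆, m⁆ ⊆ m and m generates g as a Lie algebra if and only if there exist b₃, c₃, c₂ ∈ ℝ with b₃² + c₃² ≠ 1 such that m = span_ℝ{e₁ − c₃e₆ + b₃e₅, e₂ + c₂e₆ + b₃e₄, e₃ + c₂e₅ + c₃e₄}. -/
open Matrix

attribute [local instance 100] LieRing.ofAssociativeRing

/-- The 4×4 block matrix `blk(A, X) = [[A, X], [0, A]]`. -/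
noncomputable def blk (A X : Matrix (Fin 2) (Fin 2) ℝ) : Matrix (Fin 4) (Fin 4) ℝ :=
  Matrix.reindexAlgEquiv (R := ℝ) (A := ℝ) finSumFinEquiv (Matrix.fromBlocks A X 0 A)

lemma blk_add (A X B Y : Matrix (Fin 2) (Fin 2) ℝ) :
    blk A X + blk B Y = blk (A + B) (X + Y) := by
  simp only [blk, ← map_add, Matrix.fromBlocks_add, add_zero]

lemma blk_smul (c : ℝ) (A X : Matrix (Fin 2) (Fin 2) ℝ) :
    c • blk A X = blk (c • A) (c • X) := by
  rw [blk, blk, ← _root_.map_smul, Matrix.fromBlocks_smul, smul_zero]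

lemma blk_neg (A X : Matrix (Fin 2) (Fin 2) ℝ) : -blk A X = blk (-A) (-X) := by
  rw [← neg_one_smul ℝ (blk A X), blk_smul, neg_one_smul, neg_one_smul]

lemma blk_sub (A X B Y : Matrix (Fin 2) (Fin 2) ℝ) :
    blk A X - blk B Y = blk (A - B) (X - Y) := by
  rw [sub_eq_add_neg, blk_neg, blk_add, ← sub_eq_add_neg, ← sub_eq_add_neg]

lemma blk_zero : blk 0 0 = 0 := by
  simp [blk, Matrix.fromBlocks_zero]

lemma blk_mul (A X B Y : Matrix (Fin 2) (Fin 2) ℝ) :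
    blk A X * blk B Y = blk (A * B) (A * Y + X * B) := by
  rw [blk, blk, blk, ← _root_.map_mul, Matrix.fromBlocks_multiply]
  simp only [mul_zero, zero_mul, add_zero, zero_add]

/-- `g`: the Lie subalgebra of `gl₄(ℝ)` consisting of the block matrices `blk(A,X)` with
`A`, `X` traceless. -/
noncomputable def gLie : LieSubalgebra ℝ (Matrix (Fin 4) (Fin 4) ℝ) where
  carrier := {M | ∃ A X : Matrix (Fin 2) (Fin 2) ℝ, A.trace = 0 ∧ X.trace = 0 ∧ M = blk A X}
  add_mem' := by
    rintro M N ⟨A, X, hA, hX, rfl⟩ ⟨B, Y, hB, hY, rfl⟩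
    exact ⟨A + B, X + Y, by simp [hA, hB], by simp [hX, hY], blk_add A X B Y⟩
  zero_mem' := ⟨0, 0, Matrix.trace_zero (Fin 2) ℝ, Matrix.trace_zero (Fin 2) ℝ, blk_zero.symm⟩
  smul_mem' := by
    rintro c M ⟨A, X, hA, hX, rfl⟩
    exact ⟨c • A, c • X, by simp [hA], by simp [hX], blk_smul c A X⟩
  lie_mem' := by
    rintro M N ⟨A, X, hA, hX, rfl⟩ ⟨B, Y, hB, hY, rfl⟩
    refine ⟨A * B - B * A, (A * Y + X * B) - (B * X + Y * A), ?_, ?_, ?_⟩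
    · simp [Matrix.trace_sub, Matrix.trace_mul_comm A B]
    · simp only [Matrix.trace_sub, Matrix.trace_add]
      rw [Matrix.trace_mul_comm A Y, Matrix.trace_mul_comm X B]
      ring
    · show blk A X * blk B Y - blk B Y * blk A X = _
      rw [blk_mul, blk_mul, blk_sub]

/-- The matrix `H`. -/
def matH : Matrix (Fin 2) (Fin 2) ℝ := !![1, 0; 0, -1]

/-- The matrix `T`. -/
def matT : Matrix (Fin 2) (Fin 2) ℝ := !![0, 1; 1, 0]

/-- The matrix `U`. -/
def matU : Matrix (Fin 2) (Fin 2) ℝ := !![0, 1; -1, 0]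

/-- `e₁ = blk(0, −U)`. -/
noncomputable def e₁ : Matrix (Fin 4) (Fin 4) ℝ := blk 0 (-matU)

/-- `e₂ = blk(H, 0)`. -/
noncomputable def e₂ : Matrix (Fin 4) (Fin 4) ℝ := blk matH 0

/-- `e₃ = blk(T, 0)`. -/
noncomputable def e₃ : Matrix (Fin 4) (Fin 4) ℝ := blk matT 0

/-- `e₄ = blk(U, 0)`. -/
noncomputable def e₄ : Matrix (Fin 4) (Fin 4) ℝ := blk matU 0

/-- `e₅ = blk(0, −H)`. -/
noncomputable def e₅ : Matrix (Fin 4) (Fin 4) ℝ := blk 0 (-matH)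

/-- `e₆ = blk(0, T)`. -/
noncomputable def e₆ : Matrix (Fin 4) (Fin 4) ℝ := blk 0 matT

/-- `h = span_ℝ {e₄, e₅, e₆}`. -/
noncomputable def hSub : Submodule ℝ (Matrix (Fin 4) (Fin 4) ℝ) :=
  Submodule.span ℝ {e₄, e₅, e₆}

/-!
The algebra `g` is `sl₂` over the dual numbers `ℝ[ε]`, with `blk A X` in the role of `A + ε X`. The
`2 × 2` identity `⁅⁅A, B⁆, C⁆ = 2 (tr(BC) A - tr(AC) B)` therefore holds in `g` with the
`ℝ[ε]`-valued trace form. Write `⟪·, ·⟫` for its `ε`-component, a nondegenerate symmetric form on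
`g` for which `h` is Lagrangian. For `x = blk A X`, `y = blk B Y` and `z` in a subspace `m`, the
identity shows that `⁅⁅x, y⁆, z⁆ ∈ m` if and only if `blk 0 (⟪y, z⟫ A - ⟪x, z⟫ B) ∈ m`. So every
isotropic `m` is a Lie triple system. Conversely, a Lie triple system complementary to `h` which
generates `g` is isotropic, and the isotropic complements of a Lagrangian form a three-parameter
family, here with parameters `b₃, c₃, c₂`. The condition `b₃² + c₃² ≠ 1` says that the line
`{A | blk 0 A ∈ m}` is not null for the trace form. If it is null, its orthogonal plane is a
subalgebra of `sl₂`, which keeps `m` from generating `g`.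
-/

/-- A subspace of a Lie algebra closed under the triple bracket `⁅⁅x, y⁆, z⁆`. -/
def IsLieTripleSystem {R L : Type*} [Semiring R] [LieRing L] [Module R L]
    (m : Submodule R L) : Prop :=
  ∀ x ∈ m, ∀ y ∈ m, ∀ z ∈ m, ⁅⁅x, y⁆, z⁆ ∈ m

lemma lie_lie_eq_trace_smul_sub {R : Type*} [CommRing R] {A B : Matrix (Fin 2) (Fin 2) R}
    (hA : A.trace = 0) (hB : B.trace = 0) (C : Matrix (Fin 2) (Fin 2) R) :
    ⁅⁅A, B⁆, C⁆ = (2 * (B * C).trace) • A - (2 * (A * C).trace) • B := by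
  rw [trace_fin_two] at hA hB
  have hA₁₁ : A 1 1 = -A 0 0 := eq_neg_of_add_eq_zero_right hA
  have hB₁₁ : B 1 1 = -B 0 0 := eq_neg_of_add_eq_zero_right hB
  simp only [LieRing.of_associative_ring_bracket]
  ext i j
  fin_cases i <;> fin_cases j <;>
    simp [Matrix.mul_apply, Fin.sum_univ_two, trace_fin_two, hA₁₁, hB₁₁] <;> ring

lemma blk_lie (A X B Y : Matrix (Fin 2) (Fin 2) ℝ) :
    ⁅blk A X, blk B Y⁆ = blk ⁅A, B⁆ (⁅A, Y⁆ + ⁅X, B⁆) := by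
  simp only [LieRing.of_associative_ring_bracket, blk_mul, blk_sub]
  congr 1
  abel

lemma blk_inj {A X B Y : Matrix (Fin 2) (Fin 2) ℝ} : blk A X = blk B Y ↔ A = B ∧ X = Y := by
  simp only [blk, EmbeddingLike.apply_eq_iff_eq, fromBlocks_inj]
  tauto

lemma span_le_orthogonalBilin_span_iff {R M : Type*} [CommSemiring R] [AddCommMonoid M] [Module R M]
    {B : LinearMap.BilinForm R M} {s : Set M} :
    Submodule.span R s ≤ (Submodule.span R s).orthogonalBilin B ↔
      ∀ x ∈ s, ∀ y ∈ s, B x y = 0 := by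
  refine ⟨fun h x hx y hy => h (Submodule.subset_span hy) x (Submodule.subset_span hx),
    fun h => Submodule.span_le.2 fun y hy x hx => ?_⟩
  exact (Submodule.span_le.2 fun x hx => h x hx y hy : Submodule.span R s ≤ (B.flip y).ker) hx

/-- The trace of the upper right `2 × 2` block, i.e. the `ε`-component of the trace of `A + ε X`. -/
def upperRightTrace : Matrix (Fin 4) (Fin 4) ℝ →ₗ[ℝ] ℝ :=
  entryLinearMap ℝ ℝ 0 2 + entryLinearMap ℝ ℝ 1 3

lemma upperRightTrace_blk (A X : Matrix (Fin 2) (Fin 2) ℝ) : upperRightTrace (blk A X) = X.trace :=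
  (trace_fin_two X).symm

/-- The `ε`-component of the trace form of `g = sl₂(ℝ[ε])`. -/
noncomputable def dualForm : LinearMap.BilinForm ℝ (Matrix (Fin 4) (Fin 4) ℝ) :=
  (LinearMap.mul ℝ (Matrix (Fin 4) (Fin 4) ℝ)).compr₂ upperRightTrace

lemma dualForm_blk (A X B Y : Matrix (Fin 2) (Fin 2) ℝ) :
    dualForm (blk A X) (blk B Y) = (A * Y).trace + (X * B).trace := by
  rw [dualForm, LinearMap.compr₂_apply, LinearMap.mul_apply', blk_mul, upperRightTrace_blk,
    trace_add]

section LieTriple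

variable {A X B Y : Matrix (Fin 2) (Fin 2) ℝ} {m : Submodule ℝ (Matrix (Fin 4) (Fin 4) ℝ)}

lemma lie_lie_blk (hA : A.trace = 0) (hX : X.trace = 0) (hB : B.trace = 0) (hY : Y.trace = 0)
    (C Z : Matrix (Fin 2) (Fin 2) ℝ) :
    ⁅⁅blk A X, blk B Y⁆, blk C Z⁆ =
      (2 * (B * C).trace) • blk A X - (2 * (A * C).trace) • blk B Y +
        (2 : ℝ) • blk 0 (dualForm (blk B Y) (blk C Z) • A - dualForm (blk A X) (blk C Z) • B) := by
  simp only [blk_lie, add_lie, lie_lie_eq_trace_smul_sub, hA, hX, hB, hY, dualForm_blk,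
    blk_smul, blk_sub, blk_add]
  congr 1 <;> module

lemma IsLieTripleSystem.blk_zero_mem (hm : IsLieTripleSystem m) (hA : A.trace = 0)
    (hX : X.trace = 0) (hB : B.trace = 0) (hY : Y.trace = 0) {C Z : Matrix (Fin 2) (Fin 2) ℝ}
    (hx : blk A X ∈ m) (hy : blk B Y ∈ m) (hz : blk C Z ∈ m) :
    blk 0 (dualForm (blk B Y) (blk C Z) • A - dualForm (blk A X) (blk C Z) • B) ∈ m := by
  have hxyz := hm _ hx _ hy _ hz
  rw [lie_lie_blk hA hX hB hY, m.add_mem_iff_right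
    (m.sub_mem (m.smul_mem _ hx) (m.smul_mem _ hy)), m.smul_mem_iff two_ne_zero] at hxyz
  exact hxyz

lemma isLieTripleSystem_of_le_orthogonalBilin (hg : m ≤ gLie.toSubmodule)
    (hiso : m ≤ m.orthogonalBilin dualForm) : IsLieTripleSystem m := by
  intro x hx y hy z hz
  have hxz := hiso hz x hx
  have hyz := hiso hz y hy
  obtain ⟨A, X, hA, hX, rfl⟩ := hg hx
  obtain ⟨B, Y, hB, hY, rfl⟩ := hg hy
  obtain ⟨C, Z, -, -, rfl⟩ := hg hz
  rw [lie_lie_blk hA hX hB hY, hxz, hyz, zero_smul, zero_smul, sub_zero, blk_zero, smul_zero,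
    add_zero]
  exact m.sub_mem (m.smul_mem _ hx) (m.smul_mem _ hy)

end LieTriple

/-- The element of `sl₂(ℝ)` with coordinates `p, q, r` in the basis `H, T, U`. -/
def slElem (p q r : ℝ) : Matrix (Fin 2) (Fin 2) ℝ := p • matH + q • matT + r • matU

lemma slElem_eq (p q r : ℝ) : slElem p q r = !![p, q + r; q - r, -p] := by
  ext i j
  fin_cases i <;> fin_cases j <;> simp [slElem, matH, matT, matU, sub_eq_add_neg]

lemma slElem_inj {p q r p' q' r' : ℝ} :
    slElem p q r = slElem p' q' r' ↔ p = p' ∧ q = q' ∧ r = r' := by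
  refine ⟨fun h => ?_, by rintro ⟨rfl, rfl, rfl⟩; rfl⟩
  simp only [slElem_eq, EmbeddingLike.apply_eq_iff_eq, vecCons_inj] at h
  obtain ⟨⟨hp, hqr, -⟩, ⟨hqr', -⟩, -⟩ := h
  exact ⟨hp, by linarith, by linarith⟩

lemma trace_slElem (p q r : ℝ) : (slElem p q r).trace = 0 := by
  simp [slElem_eq, trace_fin_two]

lemma exists_eq_slElem {A : Matrix (Fin 2) (Fin 2) ℝ} (hA : A.trace = 0) :
    ∃ p q r, A = slElem p q r := by
  rw [trace_fin_two] at hA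
  refine ⟨A 0 0, (A 0 1 + A 1 0) / 2, (A 0 1 - A 1 0) / 2, ?_⟩
  rw [slElem_eq]
  ext i j
  fin_cases i <;> fin_cases j <;> simp <;> linarith

lemma trace_slElem_mul_slElem (p q r p' q' r' : ℝ) :
    (slElem p q r * slElem p' q' r').trace = 2 * (p * p' + q * q' - r * r') := by
  simp only [slElem_eq, mul_fin_two, trace_fin_two_of]
  ring

lemma slElem_lie (p q r p' q' r' : ℝ) :
    ⁅slElem p q r, slElem p' q' r'⁆ =
      slElem (2 * (r * q' - q * r')) (2 * (p * r' - r * p')) (2 * (p * q' - q * p')) := by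
  simp only [LieRing.of_associative_ring_bracket, slElem_eq]
  ext i j
  fin_cases i <;> fin_cases j <;> simp <;> ring

/-- The element of `g` whose diagonal block has coordinates `p, q, r` and whose upper right block
has coordinates `s, t, w`, both in the basis `H, T, U` of `sl₂(ℝ)`. -/
noncomputable def gElem (p q r s t w : ℝ) : Matrix (Fin 4) (Fin 4) ℝ :=
  blk (slElem p q r) (slElem s t w)

section Coordinates

variable (k p q r s t w p' q' r' s' t' w' : ℝ)

lemma gElem_add : gElem p q r s t w + gElem p' q' r' s' t' w' =
    gElem (p + p') (q + q') (r + r') (s + s') (t + t') (w + w') := by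
  simp only [gElem, slElem, blk_add]
  congr 1 <;> module

lemma gElem_smul : k • gElem p q r s t w =
    gElem (k * p) (k * q) (k * r) (k * s) (k * t) (k * w) := by
  simp only [gElem, slElem, blk_smul]
  congr 1 <;> module

lemma gElem_sub : gElem p q r s t w - gElem p' q' r' s' t' w' =
    gElem (p - p') (q - q') (r - r') (s - s') (t - t') (w - w') := by
  simp only [gElem, slElem, blk_sub]
  congr 1 <;> module

lemma gElem_lie : ⁅gElem p q r s t w, gElem p' q' r' s' t' w'⁆ =
    gElem (2 * (r * q' - q * r')) (2 * (p * r' - r * p')) (2 * (p * q' - q * p'))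
      (2 * (r * t' - q * w' + w * q' - t * r')) (2 * (p * w' - r * s' + s * r' - w * p'))
      (2 * (p * t' - q * s' + s * q' - t * p')) := by
  simp only [gElem, blk_lie, slElem_lie]
  congr 1
  simp only [slElem]
  module

lemma dualForm_gElem : dualForm (gElem p q r s t w) (gElem p' q' r' s' t' w') =
    2 * (p * s' + q * t' - r * w' + s * p' + t * q' - w * r') := by
  rw [gElem, gElem, dualForm_blk, trace_slElem_mul_slElem, trace_slElem_mul_slElem]
  ring

variable {p q r s t w p' q' r' s' t' w'}

lemma gElem_inj : gElem p q r s t w = gElem p' q' r' s' t' w' ↔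
    p = p' ∧ q = q' ∧ r = r' ∧ s = s' ∧ t = t' ∧ w = w' := by
  rw [gElem, gElem, blk_inj, slElem_inj, slElem_inj]
  tauto

lemma gElem_mem_gLie : gElem p q r s t w ∈ gLie :=
  ⟨_, _, trace_slElem p q r, trace_slElem s t w, rfl⟩

lemma exists_eq_gElem {x : Matrix (Fin 4) (Fin 4) ℝ} (hx : x ∈ gLie) :
    ∃ p q r s t w, x = gElem p q r s t w := by
  obtain ⟨A, X, hA, hX, rfl⟩ := hx
  obtain ⟨p, q, r, rfl⟩ := exists_eq_slElem hA
  obtain ⟨s, t, w, rfl⟩ := exists_eq_slElem hX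
  exact ⟨p, q, r, s, t, w, rfl⟩

lemma IsLieTripleSystem.gElem_zero_mem {m : Submodule ℝ (Matrix (Fin 4) (Fin 4) ℝ)}
    (hm : IsLieTripleSystem m) (hx : gElem p q r s t w ∈ m) (hy : gElem p' q' r' s' t' w' ∈ m)
    {z : Matrix (Fin 4) (Fin 4) ℝ} (hz : z ∈ m) (hzg : z ∈ gLie) {k l : ℝ}
    (hk : dualForm (gElem p' q' r' s' t' w') z = k) (hl : dualForm (gElem p q r s t w) z = l) :
    gElem 0 0 0 (k * p - l * p') (k * q - l * q') (k * r - l * r') ∈ m := by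
  obtain ⟨C, Z, -, -, rfl⟩ := hzg
  have hmem := hm.blk_zero_mem (trace_slElem p q r) (trace_slElem s t w) (trace_slElem p' q' r')
    (trace_slElem s' t' w') hx hy hz
  rw [← gElem, ← gElem, hk, hl] at hmem
  convert hmem using 1
  rw [gElem]
  congr 1 <;> simp only [slElem] <;> module

end Coordinates

lemma e₁_eq : e₁ = gElem 0 0 0 0 0 (-1) := by simp [e₁, gElem, slElem]

lemma e₂_eq : e₂ = gElem 1 0 0 0 0 0 := by simp [e₂, gElem, slElem]

lemma e₃_eq : e₃ = gElem 0 1 0 0 0 0 := by simp [e₃, gElem, slElem]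

lemma e₄_eq : e₄ = gElem 0 0 1 0 0 0 := by simp [e₄, gElem, slElem]

lemma e₅_eq : e₅ = gElem 0 0 0 (-1) 0 0 := by simp [e₅, gElem, slElem]

lemma e₆_eq : e₆ = gElem 0 0 0 0 1 0 := by simp [e₆, gElem, slElem]

lemma mem_hSub_iff {x : Matrix (Fin 4) (Fin 4) ℝ} :
    x ∈ hSub ↔ ∃ r s t, x = gElem 0 0 r s t 0 := by
  rw [hSub, Submodule.mem_span_triple]
  simp only [e₄_eq, e₅_eq, e₆_eq, gElem_smul, gElem_add]
  constructor
  · rintro ⟨a, b, c, rfl⟩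
    exact ⟨a, -b, c, by congr 1 <;> ring⟩
  · rintro ⟨r, s, t, rfl⟩
    exact ⟨r, -s, t, by congr 1 <;> ring⟩

/-- The graph of the linear map `span {e₁, e₂, e₃} → h` which sends `e₁, e₂, e₃` to the elements of
`h` with `U, εH, εT`-coordinates `xᵢ`, `yᵢ`, `zᵢ` respectively. -/
noncomputable def hGraph (x₁ x₂ x₃ y₁ y₂ y₃ z₁ z₂ z₃ : ℝ) :
    Submodule ℝ (Matrix (Fin 4) (Fin 4) ℝ) :=
  Submodule.span ℝ {gElem 0 0 x₁ x₂ x₃ (-1), gElem 1 0 y₁ y₂ y₃ 0, gElem 0 1 z₁ z₂ z₃ 0}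

section Graph

variable {x₁ x₂ x₃ y₁ y₂ y₃ z₁ z₂ z₃ : ℝ}

local notation "Γ" => hGraph x₁ x₂ x₃ y₁ y₂ y₃ z₁ z₂ z₃

lemma gElem_e₁_mem_hGraph : gElem 0 0 x₁ x₂ x₃ (-1) ∈ Γ :=
  Submodule.subset_span (by simp)

lemma gElem_e₂_mem_hGraph : gElem 1 0 y₁ y₂ y₃ 0 ∈ Γ :=
  Submodule.subset_span (by simp)

lemma gElem_e₃_mem_hGraph : gElem 0 1 z₁ z₂ z₃ 0 ∈ Γ :=
  Submodule.subset_span (by simp)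

lemma hGraph_le_iff {m : Submodule ℝ (Matrix (Fin 4) (Fin 4) ℝ)} :
    Γ ≤ m ↔ gElem 0 0 x₁ x₂ x₃ (-1) ∈ m ∧ gElem 1 0 y₁ y₂ y₃ 0 ∈ m ∧ gElem 0 1 z₁ z₂ z₃ 0 ∈ m := by
  simp [hGraph, Submodule.span_le, Set.insert_subset_iff]

lemma hGraph_le_gLie : Γ ≤ gLie.toSubmodule :=
  hGraph_le_iff.2 ⟨gElem_mem_gLie, gElem_mem_gLie, gElem_mem_gLie⟩

lemma gElem_mem_hGraph_iff {p q r s t w : ℝ} :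
    gElem p q r s t w ∈ Γ ↔ r = p * y₁ + q * z₁ - w * x₁ ∧ s = p * y₂ + q * z₂ - w * x₂ ∧
      t = p * y₃ + q * z₃ - w * x₃ := by
  rw [hGraph, Submodule.mem_span_triple]
  simp only [gElem_smul, gElem_add, gElem_inj]
  constructor
  · rintro ⟨a, b, c, hp, hq, hr, hs, ht, hw⟩
    obtain rfl : b = p := by linarith
    obtain rfl : c = q := by linarith
    obtain rfl : a = -w := by linarith
    exact ⟨by linarith, by linarith, by linarith⟩
  · rintro ⟨rfl, rfl, rfl⟩
    exact ⟨-w, p, q, by ring, by ring, by ring, by ring, by ring, by ring⟩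

lemma exists_gElem_mem {m : Submodule ℝ (Matrix (Fin 4) (Fin 4) ℝ)}
    (hsup : gLie.toSubmodule ≤ m ⊔ hSub) (p q w : ℝ) : ∃ r s t, gElem p q r s t w ∈ m := by
  obtain ⟨x, hx, y, hy, hxy⟩ :=
    Submodule.mem_sup.1 (hsup (gElem_mem_gLie : gElem p q 0 0 0 w ∈ gLie))
  obtain ⟨r, s, t, rfl⟩ := mem_hSub_iff.1 hy
  refine ⟨0 - r, 0 - s, 0 - t, ?_⟩
  rw [eq_sub_of_add_eq hxy, gElem_sub, sub_zero, sub_zero, sub_zero] at hx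
  exact hx

lemma gLie_le_hGraph_sup_hSub : gLie.toSubmodule ≤ Γ ⊔ hSub := by
  intro x hx
  obtain ⟨p, q, r, s, t, w, rfl⟩ := exists_eq_gElem hx
  refine Submodule.mem_sup.2 ⟨gElem p q _ _ _ w, gElem_mem_hGraph_iff.2 ⟨rfl, rfl, rfl⟩, _,
    mem_hSub_iff.2 ⟨r - (p * y₁ + q * z₁ - w * x₁), s - (p * y₂ + q * z₂ - w * x₂),
      t - (p * y₃ + q * z₃ - w * x₃), rfl⟩, ?_⟩
  simp only [gElem_add, add_zero, add_sub_cancel]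

lemma exists_eq_hGraph {m : Submodule ℝ (Matrix (Fin 4) (Fin 4) ℝ)} (hdisj : m ⊓ hSub = ⊥)
    (hsup : m ⊔ hSub = gLie.toSubmodule) :
    ∃ x₁ x₂ x₃ y₁ y₂ y₃ z₁ z₂ z₃, m = hGraph x₁ x₂ x₃ y₁ y₂ y₃ z₁ z₂ z₃ := by
  obtain ⟨x₁, x₂, x₃, hx⟩ := exists_gElem_mem hsup.ge 0 0 (-1)
  obtain ⟨y₁, y₂, y₃, hy⟩ := exists_gElem_mem hsup.ge 1 0 0
  obtain ⟨z₁, z₂, z₃, hz⟩ := exists_gElem_mem hsup.ge 0 1 0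
  refine ⟨x₁, x₂, x₃, y₁, y₂, y₃, z₁, z₂, z₃, Eq.symm ?_⟩
  exact eq_of_le_of_inf_le_of_sup_le (hGraph_le_iff.2 ⟨hx, hy, hz⟩) (hdisj.trans_le bot_le)
    (hsup.trans_le gLie_le_hGraph_sup_hSub)

lemma hGraph_le_orthogonalBilin_iff :
    Γ ≤ Submodule.orthogonalBilin dualForm Γ ↔
      x₁ = 0 ∧ x₂ = -y₁ ∧ x₃ = -z₁ ∧ y₂ = 0 ∧ z₂ = -y₃ ∧ z₃ = 0 := by
  rw [hGraph, span_le_orthogonalBilin_span_iff]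
  simp only [Set.forall_mem_insert, Set.mem_singleton_iff, forall_eq, dualForm_gElem]
  constructor
  · rintro ⟨⟨h₁₁, h₁₂, h₁₃⟩, ⟨-, h₂₂, h₂₃⟩, -, -, h₃₃⟩
    refine ⟨?_, ?_, ?_, ?_, ?_, ?_⟩ <;> linarith
  · rintro ⟨rfl, rfl, rfl, rfl, rfl, rfl⟩
    refine ⟨⟨?_, ?_, ?_⟩, ⟨?_, ?_, ?_⟩, ?_, ?_, ?_⟩ <;> ring

lemma IsLieTripleSystem.hGraph_x₁_eq_zero (hΓ : IsLieTripleSystem Γ) : x₁ = 0 := by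
  have hmem := hΓ.gElem_zero_mem gElem_e₁_mem_hGraph gElem_e₂_mem_hGraph gElem_e₁_mem_hGraph
    gElem_mem_gLie (dualForm_gElem ..) (dualForm_gElem ..)
  obtain ⟨hU, hH, -⟩ := gElem_mem_hGraph_iff.1 hmem
  have hsq : x₁ ^ 2 = 0 := by linear_combination x₂ / 4 * hU - x₁ / 4 * hH
  exact pow_eq_zero_iff two_ne_zero |>.1 hsq

lemma IsLieTripleSystem.dualForm_e₁_eq_zero
    (hΓ : IsLieTripleSystem (hGraph 0 x₂ x₃ y₁ y₂ y₃ z₁ z₂ z₃)) {v : Matrix (Fin 4) (Fin 4) ℝ}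
    (hv : v ∈ hGraph 0 x₂ x₃ y₁ y₂ y₃ z₁ z₂ z₃) : dualForm (gElem 0 0 0 x₂ x₃ (-1)) v = 0 := by
  set l := dualForm (gElem 0 0 0 x₂ x₃ (-1)) v with hl
  have hmem₂ := hΓ.gElem_zero_mem gElem_e₁_mem_hGraph gElem_e₂_mem_hGraph hv (hGraph_le_gLie hv)
    rfl hl.symm
  have hmem₃ := hΓ.gElem_zero_mem gElem_e₁_mem_hGraph gElem_e₃_mem_hGraph hv (hGraph_le_gLie hv)
    rfl hl.symm
  obtain ⟨-, hH₂, hT₂⟩ := gElem_mem_hGraph_iff.1 hmem₂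
  obtain ⟨-, -, hT₃⟩ := gElem_mem_hGraph_iff.1 hmem₃
  have hsq : l ^ 2 = 0 := by
    linear_combination -l * hH₂ + l * y₁ * x₂ * hT₃ - l * z₁ * x₂ * hT₂
  exact pow_eq_zero_iff two_ne_zero |>.1 hsq

lemma IsLieTripleSystem.dualForm_e₂_e₃_eq_zero (hyz : y₁ ^ 2 + z₁ ^ 2 ≠ 1)
    (hΓ : IsLieTripleSystem (hGraph 0 (-y₁) (-z₁) y₁ y₂ y₃ z₁ z₂ z₃))
    {v : Matrix (Fin 4) (Fin 4) ℝ} (hv : v ∈ hGraph 0 (-y₁) (-z₁) y₁ y₂ y₃ z₁ z₂ z₃) :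
    dualForm (gElem 1 0 y₁ y₂ y₃ 0) v = 0 ∧ dualForm (gElem 0 1 z₁ z₂ z₃ 0) v = 0 := by
  set l := dualForm (gElem 1 0 y₁ y₂ y₃ 0) v with hl
  set k := dualForm (gElem 0 1 z₁ z₂ z₃ 0) v with hk
  have hmem := hΓ.gElem_zero_mem gElem_e₂_mem_hGraph gElem_e₃_mem_hGraph hv (hGraph_le_gLie hv)
    hk.symm hl.symm
  obtain ⟨-, hH, hT⟩ := gElem_mem_hGraph_iff.1 hmem
  have hw : k * y₁ - l * z₁ = 0 := by
    refine (mul_eq_zero.1 ?_).resolve_right (sub_ne_zero.2 hyz)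
    linear_combination -y₁ * hH - z₁ * hT
  exact ⟨by linear_combination -hT - z₁ * hw, by linear_combination hH + y₁ * hw⟩

/-- The subalgebra of all `blk A X` in `g` with `A` orthogonal to the null vector `b H + c T + U`
for the trace form. -/
noncomputable def nullOrthogonal (b c : ℝ) (hbc : b ^ 2 + c ^ 2 = 1) :
    LieSubalgebra ℝ (Matrix (Fin 4) (Fin 4) ℝ) where
  carrier := {x | ∃ p q s t w, x = gElem p q (p * b + q * c) s t w}
  add_mem' := by
    rintro _ _ ⟨p, q, s, t, w, rfl⟩ ⟨p', q', s', t', w', rfl⟩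
    exact ⟨p + p', q + q', s + s', t + t', w + w', by rw [gElem_add]; congr 1; ring⟩
  zero_mem' := ⟨0, 0, 0, 0, 0, by simp [gElem, slElem, blk_zero]⟩
  smul_mem' := by
    rintro k _ ⟨p, q, s, t, w, rfl⟩
    exact ⟨k * p, k * q, k * s, k * t, k * w, by rw [gElem_smul]; congr 1; ring⟩
  lie_mem' := by
    rintro _ _ ⟨p, q, s, t, w, rfl⟩ ⟨p', q', s', t', w', rfl⟩
    rw [gElem_lie]
    refine ⟨_, _, _, _, _, gElem_inj.2 ⟨rfl, rfl, ?_, rfl, rfl, rfl⟩⟩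
    linear_combination (-2 * (p * q' - q * p')) * hbc

lemma e₄_notMem_nullOrthogonal {b c : ℝ} (hbc : b ^ 2 + c ^ 2 = 1) :
    e₄ ∉ nullOrthogonal b c hbc := by
  rintro ⟨p, q, s, t, w, h⟩
  rw [e₄_eq, gElem_inj] at h
  obtain ⟨rfl, rfl, h, -⟩ := h
  simp at h

lemma sq_add_sq_ne_one_of_lieSpan_hGraph_eq_gLie
    (hgen : LieSubalgebra.lieSpan ℝ _ (hGraph 0 x₂ x₃ y₁ y₂ y₃ z₁ z₂ z₃ : Set _) = gLie) :
    y₁ ^ 2 + z₁ ^ 2 ≠ 1 := by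
  intro hyz
  have hle : hGraph 0 x₂ x₃ y₁ y₂ y₃ z₁ z₂ z₃ ≤ (nullOrthogonal y₁ z₁ hyz).toSubmodule :=
    hGraph_le_iff.2 ⟨⟨0, 0, x₂, x₃, -1, by simp⟩, ⟨1, 0, y₂, y₃, 0, by simp⟩,
      ⟨0, 1, z₂, z₃, 0, by simp⟩⟩
  have hg : gLie ≤ nullOrthogonal y₁ z₁ hyz := hgen ▸ LieSubalgebra.lieSpan_le.2 hle
  exact e₄_notMem_nullOrthogonal hyz (hg (e₄_eq ▸ gElem_mem_gLie))

lemma IsLieTripleSystem.hGraph_le_orthogonalBilin (hΓ : IsLieTripleSystem Γ)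
    (hgen : LieSubalgebra.lieSpan ℝ _ (Γ : Set _) = gLie) :
    Γ ≤ Submodule.orthogonalBilin dualForm Γ := by
  obtain rfl := hΓ.hGraph_x₁_eq_zero
  have h₁₂ := hΓ.dualForm_e₁_eq_zero gElem_e₂_mem_hGraph
  have h₁₃ := hΓ.dualForm_e₁_eq_zero gElem_e₃_mem_hGraph
  rw [dualForm_gElem] at h₁₂ h₁₃
  obtain rfl : x₂ = -y₁ := by linarith
  obtain rfl : x₃ = -z₁ := by linarith
  have hyz := sq_add_sq_ne_one_of_lieSpan_hGraph_eq_gLie hgen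
  obtain ⟨h₂₂, h₃₂⟩ := hΓ.dualForm_e₂_e₃_eq_zero hyz gElem_e₂_mem_hGraph
  obtain ⟨-, h₃₃⟩ := hΓ.dualForm_e₂_e₃_eq_zero hyz gElem_e₃_mem_hGraph
  rw [dualForm_gElem] at h₂₂ h₃₂ h₃₃
  refine hGraph_le_orthogonalBilin_iff.2 ⟨rfl, rfl, rfl, ?_, ?_, ?_⟩ <;> linarith

end Graph

section Generators

variable (b c d : ℝ)

lemma generator₁_eq : e₁ - c • e₆ + b • e₅ = gElem 0 0 0 (-b) (-c) (-1) := by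
  simp only [e₁_eq, e₅_eq, e₆_eq, gElem_smul, gElem_add, gElem_sub]
  congr 1 <;> ring

lemma generator₂_eq : e₂ + d • e₆ + b • e₄ = gElem 1 0 b 0 d 0 := by
  simp only [e₂_eq, e₄_eq, e₆_eq, gElem_smul, gElem_add]
  congr 1 <;> ring

lemma generator₃_eq : e₃ + d • e₅ + c • e₄ = gElem 0 1 c (-d) 0 0 := by
  simp only [e₃_eq, e₄_eq, e₅_eq, gElem_smul, gElem_add]
  congr 1 <;> ring

lemma span_generators_eq_hGraph :
    Submodule.span ℝ {e₁ - c • e₆ + b • e₅, e₂ + d • e₆ + b • e₄, e₃ + d • e₅ + c • e₄} =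
      hGraph 0 (-b) (-c) b 0 d c (-d) 0 := by
  rw [generator₁_eq, generator₂_eq, generator₃_eq, hGraph]

lemma lie_generator₂_generator₁ :
    ⁅e₂ + d • e₆ + b • e₄, e₁ - c • e₆ + b • e₅⁆ =
      (2 * c) • (e₁ - c • e₆ + b • e₅) + (2 * (b ^ 2 + c ^ 2 - 1)) • e₆ := by
  rw [generator₁_eq, generator₂_eq, e₆_eq, gElem_lie, gElem_smul, gElem_smul, gElem_add]
  congr 1 <;> ring

lemma lie_generator₃_generator₁ :
    ⁅e₃ + d • e₅ + c • e₄, e₁ - c • e₆ + b • e₅⁆ =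
      (-2 * b) • (e₁ - c • e₆ + b • e₅) + (2 * (b ^ 2 + c ^ 2 - 1)) • e₅ := by
  rw [generator₁_eq, generator₃_eq, e₅_eq, gElem_lie, gElem_smul, gElem_smul, gElem_add]
  congr 1 <;> ring

lemma lie_generator₂_generator₃ :
    ⁅e₂ + d • e₆ + b • e₄, e₃ + d • e₅ + c • e₄⁆ =
      (2 * b) • (e₂ + d • e₆ + b • e₄) + (2 * c) • (e₃ + d • e₅ + c • e₄) +
        (-2 * (b ^ 2 + c ^ 2 - 1)) • e₄ := by
  rw [generator₂_eq, generator₃_eq, e₄_eq, gElem_lie, gElem_smul, gElem_smul, gElem_smul,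
    gElem_add, gElem_add]
  congr 1 <;> ring

variable {b c d}

lemma hSub_le_of_generators_mem (hbc : b ^ 2 + c ^ 2 ≠ 1)
    {K : LieSubalgebra ℝ (Matrix (Fin 4) (Fin 4) ℝ)} (h₁ : e₁ - c • e₆ + b • e₅ ∈ K)
    (h₂ : e₂ + d • e₆ + b • e₄ ∈ K) (h₃ : e₃ + d • e₅ + c • e₄ ∈ K) : hSub ≤ K.toSubmodule := by
  have hD : b ^ 2 + c ^ 2 - 1 ≠ 0 := sub_ne_zero.2 hbc
  have h₂₁ := K.lie_mem h₂ h₁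
  have h₃₁ := K.lie_mem h₃ h₁
  have h₂₃ := K.lie_mem h₂ h₃
  rw [lie_generator₂_generator₁, ← K.mem_toSubmodule, Submodule.add_mem_iff_right _
    (K.smul_mem _ h₁), Submodule.smul_mem_iff _ (by simpa using hD)] at h₂₁
  rw [lie_generator₃_generator₁, ← K.mem_toSubmodule, Submodule.add_mem_iff_right _
    (K.smul_mem _ h₁), Submodule.smul_mem_iff _ (by simpa using hD)] at h₃₁
  rw [lie_generator₂_generator₃, ← K.mem_toSubmodule, Submodule.add_mem_iff_right _
    (K.add_mem (K.smul_mem _ h₂) (K.smul_mem _ h₃)),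
    Submodule.smul_mem_iff _ (by simpa using hD)] at h₂₃
  rw [hSub, Submodule.span_le]
  rintro _ (rfl | rfl | rfl)
  exacts [h₂₃, h₃₁, h₂₁]

lemma lieSpan_eq_gLie_of_span_generators (hbc : b ^ 2 + c ^ 2 ≠ 1)
    {m : Submodule ℝ (Matrix (Fin 4) (Fin 4) ℝ)} (hsup : m ⊔ hSub = gLie.toSubmodule)
    (hm : m = Submodule.span ℝ
      {e₁ - c • e₆ + b • e₅, e₂ + d • e₆ + b • e₄, e₃ + d • e₅ + c • e₄}) :
    LieSubalgebra.lieSpan ℝ (Matrix (Fin 4) (Fin 4) ℝ) (m : Set _) = gLie := by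
  have hmL := LieSubalgebra.subset_lieSpan (R := ℝ) (s := (m : Set (Matrix (Fin 4) (Fin 4) ℝ)))
  have hhL := hSub_le_of_generators_mem hbc (b := b) (c := c) (d := d)
    (hmL (hm ▸ Submodule.subset_span (by simp))) (hmL (hm ▸ Submodule.subset_span (by simp)))
    (hmL (hm ▸ Submodule.subset_span (by simp)))
  refine le_antisymm (LieSubalgebra.lieSpan_le.2 (hsup ▸ le_sup_left : m ≤ gLie.toSubmodule)) ?_
  rw [← LieSubalgebra.toSubmodule_le_toSubmodule, ← hsup]
  exact sup_le hmL hhL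

end Generators

/-- for a real subspace `m` with `g = m ⊕ h`, `m` satisfies
`⁅⁅m, m⁆, m⁆ ⊆ m` and generates `g` as a Lie algebra if and only if
`m = span_ℝ {e₁ − c₃e₆ + b₃e₅, e₂ + c₂e₆ + b₃e₄, e₃ + c₂e₅ + c₃e₄}` for some `b₃, c₃, c₂`
with `b₃² + c₃² ≠ 1`. -/
theorem stmt_15 (m : Submodule ℝ (Matrix (Fin 4) (Fin 4) ℝ))
    (hdisj : m ⊓ hSub = ⊥) (hsup : m ⊔ hSub = gLie.toSubmodule) :
    ((∀ x ∈ m, ∀ y ∈ m, ∀ z ∈ m, ⁅⁅x, y⁆, z⁆ ∈ m) ∧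
      LieSubalgebra.lieSpan ℝ (Matrix (Fin 4) (Fin 4) ℝ) (m : Set _) = gLie)
    ↔ ∃ b₃ c₃ c₂ : ℝ, b₃ ^ 2 + c₃ ^ 2 ≠ 1 ∧
        m = Submodule.span ℝ {e₁ - c₃ • e₆ + b₃ • e₅, e₂ + c₂ • e₆ + b₃ • e₄,
          e₃ + c₂ • e₅ + c₃ • e₄} := by
  constructor
  · rintro ⟨htriple, hgen⟩
    obtain ⟨x₁, x₂, x₃, y₁, y₂, y₃, z₁, z₂, z₃, rfl⟩ := exists_eq_hGraph hdisj hsup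
    have hiso := IsLieTripleSystem.hGraph_le_orthogonalBilin htriple hgen
    obtain ⟨rfl, rfl, rfl, rfl, rfl, rfl⟩ := hGraph_le_orthogonalBilin_iff.1 hiso
    exact ⟨y₁, z₁, y₃, sq_add_sq_ne_one_of_lieSpan_hGraph_eq_gLie hgen,
      (span_generators_eq_hGraph y₁ z₁ y₃).symm⟩
  · rintro ⟨b, c, d, hbc, hm⟩
    refine ⟨?_, lieSpan_eq_gLie_of_span_generators hbc hsup hm⟩
    rw [span_generators_eq_hGraph] at hm
    subst hm
    exact isLieTripleSystem_of_le_orthogonalBilin hGraph_le_gLie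
      (hGraph_le_orthogonalBilin_iff.2 ⟨rfl, rfl, rfl, rfl, rfl, rfl⟩)
end

section
/- For b₃, c₃, c₂ ∈ ℝ let m = span_ℝ{e₁ − c₃e₆ + b₃e₅, e₂ + c₂e₆ + b₃e₄, e₃ + c₂e₅ + c₃e₄} ⊆ g. Then ⁅m, m⁆ = span_ℝ{d₁, d₂, d₃} where d₁ = (1−b₃²)e₆ − c₃e₁ − c₃b₃e₅, d₂ = (1−c₃²)e₅ + b₃e₁ − c₃b₃e₆, d₃ = e₄ + c₃e₃ + b₃e₂ + c₂c₃e₅ + b₃c₂e₆; the subspace span_ℝ{d₁, d₂} is a Lie ideal of the subalgebra ⁅m, m⁆; and trace(ad d₃ ∘ ad d₃) < 0 (the trace of the adjoint action on g) if and only if b₃² + c₃² < 1. -/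
open Matrix

attribute [local instance 100] LieRing.ofAssociativeRing

/-!
Put `A = H + b₃ U`, `B = T + c₃ U` and `P = ⁅A, B⁆ / 2 = U + c₃ T + b₃ H` in `sl₂(ℝ)`. The
generators of `m` are `blk 0 (-P)`, `blk A (c₂ T)` and `blk B (-c₂ H)`, and half their brackets are
`d₁ = blk 0 (⁅A, P⁆ / 2)`, `d₂ = blk 0 (⁅B, P⁆ / 2)` and `d₃`, whose diagonal block is `P`.

Both `⁅A, P⁆` and `⁅B, P⁆` lie in `span {A, B}`, so applying `ad P` to them again gives combinations
of `⁅A, P⁆` and `⁅B, P⁆`; as the matrices `blk 0 X` commute with each other, this makes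
`span {d₁, d₂}` an ideal.

With respect to `g = sl₂ ⋉ sl₂` the operator `ad (blk X Y) ∘ ad (blk Z W)` is block triangular with
both diagonal blocks equal to `ad X ∘ ad Z`. The Killing form of `g` is therefore twice that of
`sl₂`, namely `8 tr (X Z)`, and `tr (P ^ 2) = 2 (b₃ ^ 2 + c₃ ^ 2 - 1)`.
-/

section LieSpan

variable {R L M : Type*} [CommRing R] [LieRing L] [LieAlgebra R L] [AddCommGroup M] [Module R M]
  [LieRingModule L M] [LieModule R L M]

lemma span_image2_lie_span (s : Set L) (t : Set M) :
    Submodule.span R (Set.image2 (fun x y => ⁅x, y⁆) (Submodule.span R s : Set L)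
        (Submodule.span R t : Set M)) =
      Submodule.span R (Set.image2 (fun x y => ⁅x, y⁆) s t) := by
  let bracket : L →ₗ[R] M →ₗ[R] M := LieModule.toEnd R L M
  exact (Submodule.map₂_eq_span_image2 bracket _ _).symm.trans
    (Submodule.map₂_span_span R bracket s t)

lemma lie_mem_of_mem_span {s : Set L} {t : Set M} {N : Submodule R M}
    (h : ∀ x ∈ s, ∀ y ∈ t, ⁅x, y⁆ ∈ N) {x : L} {y : M}
    (hx : x ∈ Submodule.span R s) (hy : y ∈ Submodule.span R t) : ⁅x, y⁆ ∈ N := by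
  have hxy : ⁅x, y⁆ ∈ Submodule.span R (Set.image2 (fun x y => ⁅x, y⁆) s t) := by
    rw [← span_image2_lie_span]
    exact Submodule.subset_span ⟨x, hx, y, hy, rfl⟩
  exact Submodule.span_le.2 (Set.image2_subset_iff.2 h) hxy

lemma span_image2_lie_span_triple (x y z : L) :
    Submodule.span R (Set.image2 (fun x y => ⁅x, y⁆) (Submodule.span R {x, y, z} : Set L)
        (Submodule.span R {x, y, z} : Set L)) =
      Submodule.span R {⁅x, y⁆, ⁅x, z⁆, ⁅y, z⁆} := by
  rw [span_image2_lie_span]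
  apply le_antisymm <;> rw [Submodule.span_le]
  · have hxy : ⁅x, y⁆ ∈ Submodule.span R {⁅x, y⁆, ⁅x, z⁆, ⁅y, z⁆} :=
      Submodule.subset_span (by simp)
    have hxz : ⁅x, z⁆ ∈ Submodule.span R {⁅x, y⁆, ⁅x, z⁆, ⁅y, z⁆} :=
      Submodule.subset_span (by simp)
    have hyz : ⁅y, z⁆ ∈ Submodule.span R {⁅x, y⁆, ⁅x, z⁆, ⁅y, z⁆} :=
      Submodule.subset_span (by simp)
    have hyx := lie_skew x y ▸ neg_mem hxy
    have hzx := lie_skew x z ▸ neg_mem hxz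
    have hzy := lie_skew y z ▸ neg_mem hyz
    rintro _ ⟨u, rfl | rfl | rfl, v, rfl | rfl | rfl, rfl⟩ <;> simp_all
  · rintro _ (rfl | rfl | rfl) <;> exact Submodule.subset_span ⟨_, by simp, _, by simp, rfl⟩

end LieSpan

section Trace

lemma trace_eq_trace_fst_add_trace_snd {R M N : Type*} [CommRing R] [AddCommGroup M] [Module R M]
    [Module.Free R M] [Module.Finite R M] [AddCommGroup N] [Module R N] [Module.Free R N]
    [Module.Finite R N] (f : M × N →ₗ[R] M × N) :
    LinearMap.trace R (M × N) f =
      LinearMap.trace R M (LinearMap.fst R M N ∘ₗ f ∘ₗ LinearMap.inl R M N) +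
        LinearMap.trace R N (LinearMap.snd R M N ∘ₗ f ∘ₗ LinearMap.inr R M N) := by
  have hf : f = (f ∘ₗ LinearMap.inl R M N) ∘ₗ LinearMap.fst R M N +
      (f ∘ₗ LinearMap.inr R M N) ∘ₗ LinearMap.snd R M N := by
    ext <;> simp [Prod.mk_zero_zero]
  conv_lhs => rw [hf]
  rw [map_add, LinearMap.trace_comp_comm', LinearMap.trace_comp_comm' (LinearMap.snd R M N)]

variable {R n : Type*} [CommRing R] [Fintype n]

lemma trace_mulLeft_comp_mulRight (A B : Matrix n n R) :
    LinearMap.trace R (Matrix n n R) (LinearMap.mulLeft R A ∘ₗ LinearMap.mulRight R B) =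
      A.trace * B.trace := by
  classical
  rw [LinearMap.trace_eq_matrix_trace R (Matrix.stdBasis R n n), Matrix.trace,
    Fintype.sum_prod_type, Matrix.trace, Matrix.trace, Finset.sum_mul_sum]
  refine Finset.sum_congr rfl fun i _ => Finset.sum_congr rfl fun j _ => ?_
  rw [Matrix.diag_apply, LinearMap.toMatrix_apply, Matrix.stdBasis_eq_single]
  change (A * (Matrix.single i j 1 * B) : Matrix n n R) i j = _
  simp [Matrix.mul_apply, Matrix.single_apply, ite_and]

lemma trace_ad_comp_ad_matrix [DecidableEq n] (A B : Matrix n n R) :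
    LinearMap.trace R (Matrix n n R)
        (LieAlgebra.ad R (Matrix n n R) A ∘ₗ LieAlgebra.ad R (Matrix n n R) B) =
      2 * (Fintype.card n * (A * B).trace - A.trace * B.trace) := by
  have had : LieAlgebra.ad R (Matrix n n R) A ∘ₗ LieAlgebra.ad R (Matrix n n R) B =
      LinearMap.mulLeft R (A * B) ∘ₗ LinearMap.mulRight R 1 -
        LinearMap.mulLeft R A ∘ₗ LinearMap.mulRight R B -
        LinearMap.mulLeft R B ∘ₗ LinearMap.mulRight R A +
        LinearMap.mulLeft R 1 ∘ₗ LinearMap.mulRight R (B * A) := by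
    apply LinearMap.ext
    intro Z
    simp only [LieRing.of_associative_ring_bracket, LieAlgebra.ad_apply, LinearMap.comp_apply,
      LinearMap.sub_apply, LinearMap.add_apply, LinearMap.mulLeft_apply, LinearMap.mulRight_apply]
    noncomm_ring
  simp only [had, map_add, map_sub, trace_mulLeft_comp_mulRight, Matrix.trace_one,
    Matrix.trace_mul_comm B A]
  ring

end Trace

section Blocks

variable (A X B Y : Matrix (Fin 2) (Fin 2) ℝ)

lemma lie_blk : ⁅blk A X, blk B Y⁆ = blk ⁅A, B⁆ (⁅A, Y⁆ + ⁅X, B⁆) := by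
  simp only [LieRing.of_associative_ring_bracket, blk_mul, blk_sub]
  congr 1
  abel

lemma lie_blk_zero_left : ⁅blk 0 X, blk B Y⁆ = blk 0 ⁅X, B⁆ := by
  rw [lie_blk, zero_lie, zero_lie, zero_add]

lemma lie_blk_zero_right : ⁅blk A X, blk 0 Y⁆ = blk 0 ⁅A, Y⁆ := by
  rw [lie_blk, lie_zero, lie_zero, add_zero]

lemma lie_blk_mem_gLie : ⁅blk A X, blk B Y⁆ ∈ gLie :=
  ⟨_, _, by simp [LieRing.of_associative_ring_bracket, Matrix.trace_mul_comm A B],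
    by simp [LieRing.of_associative_ring_bracket, Matrix.trace_mul_comm A Y,
      Matrix.trace_mul_comm X B], lie_blk A X B Y⟩

/-- The map `(A, X) ↦ blk A X` as a linear map on all pairs of `2 × 2` matrices, traceless or
not. -/
noncomputable def blkLinear :
    Matrix (Fin 2) (Fin 2) ℝ × Matrix (Fin 2) (Fin 2) ℝ →ₗ[ℝ] Matrix (Fin 4) (Fin 4) ℝ where
  toFun p := blk p.1 p.2
  map_add' p q := (blk_add p.1 p.2 q.1 q.2).symm
  map_smul' c p := (blk_smul c p.1 p.2).symm

/-- The top two `2 × 2` blocks of a `4 × 4` matrix; this recovers `(A, X)` from `blk A X`. -/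
def topBlocks :
    Matrix (Fin 4) (Fin 4) ℝ →ₗ[ℝ] Matrix (Fin 2) (Fin 2) ℝ × Matrix (Fin 2) (Fin 2) ℝ where
  toFun (M : Matrix (Fin 4) (Fin 4) ℝ) :=
    let N := (Matrix.reindexAlgEquiv ℝ ℝ finSumFinEquiv).symm M
    (N.toBlocks₁₁, N.toBlocks₁₂)
  map_add' _ _ := rfl
  map_smul' _ _ := rfl

lemma topBlocks_blk : topBlocks (blk A X) = (A, X) := by
  have hblocks : (reindexAlgEquiv ℝ ℝ finSumFinEquiv).symm (blk A X) = fromBlocks A X 0 A :=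
    AlgEquiv.symm_apply_apply _ _
  exact Prod.ext (congrArg toBlocks₁₁ hblocks) (congrArg toBlocks₁₂ hblocks)

lemma blkLinear_topBlocks {M : Matrix (Fin 4) (Fin 4) ℝ} (hM : M ∈ gLie) :
    blkLinear (topBlocks M) = M := by
  obtain ⟨A, X, -, -, rfl⟩ := hM
  rw [topBlocks_blk]
  rfl

-- Bracketing with `g` sends every block matrix into `g`, so the trace over `g` may be computed
-- over all pairs of `2 × 2` matrices.
lemma killingForm_gLie_eq_trace (x y : gLie) :
    killingForm ℝ gLie x y =
      LinearMap.trace ℝ _ (topBlocks ∘ₗ LieAlgebra.ad ℝ _ (x : Matrix (Fin 4) (Fin 4) ℝ) ∘ₗ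
        LieAlgebra.ad ℝ _ (y : Matrix (Fin 4) (Fin 4) ℝ) ∘ₗ blkLinear) := by
  have hmem (p) : (LieAlgebra.ad ℝ _ (x : Matrix (Fin 4) (Fin 4) ℝ) ∘ₗ
      LieAlgebra.ad ℝ _ (y : Matrix (Fin 4) (Fin 4) ℝ) ∘ₗ blkLinear) p ∈ gLie.toSubmodule := by
    obtain ⟨_, B, Y, -, -, rfl⟩ := y
    exact gLie.lie_mem x.2 (lie_blk_mem_gLie B Y p.1 p.2)
  have had : LieAlgebra.ad ℝ gLie x ∘ₗ LieAlgebra.ad ℝ gLie y =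
      LinearMap.codRestrict gLie.toSubmodule _ hmem ∘ₗ topBlocks ∘ₗ gLie.toSubmodule.subtype := by
    refine LinearMap.ext fun z => Subtype.ext ?_
    exact congrArg (fun w => ⁅x.1, ⁅y.1, w⁆⁆) (blkLinear_topBlocks z.2).symm
  rw [killingForm_apply_apply, had]
  exact LinearMap.trace_comp_comm' _ _

lemma trace_topBlocks_ad_blk_comp_ad_blk :
    LinearMap.trace ℝ _ (topBlocks ∘ₗ LieAlgebra.ad ℝ _ (blk A X) ∘ₗ
        LieAlgebra.ad ℝ _ (blk B Y) ∘ₗ blkLinear) =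
      2 * LinearMap.trace ℝ _ (LieAlgebra.ad ℝ _ A ∘ₗ LieAlgebra.ad ℝ _ B) := by
  have happly (Z W : Matrix (Fin 2) (Fin 2) ℝ) :
      (topBlocks ∘ₗ LieAlgebra.ad ℝ _ (blk A X) ∘ₗ LieAlgebra.ad ℝ _ (blk B Y) ∘ₗ blkLinear)
        (Z, W) = (⁅A, ⁅B, Z⁆⁆, ⁅A, ⁅B, W⁆ + ⁅Y, Z⁆⁆ + ⁅X, ⁅B, Z⁆⁆) := by
    change topBlocks ⁅blk A X, ⁅blk B Y, blk Z W⁆⁆ = _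
    rw [lie_blk, lie_blk, topBlocks_blk]
  rw [trace_eq_trace_fst_add_trace_snd, two_mul]
  congr 2 <;> refine LinearMap.ext fun Z => ?_
  · exact congrArg Prod.fst (happly Z 0)
  · refine (congrArg Prod.snd (happly 0 Z)).trans ?_
    simp

lemma killingForm_gLie (x y : gLie) :
    killingForm ℝ gLie x y = 8 * ((topBlocks x).1 * (topBlocks y).1).trace := by
  rw [killingForm_gLie_eq_trace]
  obtain ⟨_, A, X, hA, -, rfl⟩ := x
  obtain ⟨_, B, Y, -, -, rfl⟩ := y
  rw [trace_topBlocks_ad_blk_comp_ad_blk, trace_ad_comp_ad_matrix, topBlocks_blk, topBlocks_blk,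
    hA, Fintype.card_fin]
  push_cast
  ring

end Blocks

lemma lie_matH_matT : ⁅matH, matT⁆ = (2 : ℝ) • matU := by
  ext i j
  fin_cases i <;> fin_cases j <;>
    norm_num [LieRing.of_associative_ring_bracket, matH, matT, matU]

lemma lie_matH_matU : ⁅matH, matU⁆ = (2 : ℝ) • matT := by
  ext i j
  fin_cases i <;> fin_cases j <;>
    norm_num [LieRing.of_associative_ring_bracket, matH, matT, matU]

lemma lie_matT_matU : ⁅matT, matU⁆ = (-2 : ℝ) • matH := by
  ext i j
  fin_cases i <;> fin_cases j <;>
    norm_num [LieRing.of_associative_ring_bracket, matH, matT, matU]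

lemma lie_matT_matH : ⁅matT, matH⁆ = (-2 : ℝ) • matU := by
  rw [← lie_skew, lie_matH_matT, neg_smul]

lemma lie_matU_matH : ⁅matU, matH⁆ = (-2 : ℝ) • matT := by
  rw [← lie_skew, lie_matH_matU, neg_smul]

lemma lie_matU_matT : ⁅matU, matT⁆ = (2 : ℝ) • matH := by
  rw [← lie_skew, lie_matT_matU, neg_smul, neg_neg]

section Generators

variable (b c : ℝ)

/-- `A = H + b U`, the `sl₂`-part of the second generator of `m`. -/
noncomputable def matA : Matrix (Fin 2) (Fin 2) ℝ := matH + b • matU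

/-- `B = T + c U`, the `sl₂`-part of the third generator of `m`. -/
noncomputable def matB : Matrix (Fin 2) (Fin 2) ℝ := matT + c • matU

/-- `P = U + c T + b H`, the `sl₂`-part of `d₃`; it is half the bracket of `matA b` and `matB c`. -/
noncomputable def matP : Matrix (Fin 2) (Fin 2) ℝ := matU + c • matT + b • matH

/-- The off-diagonal block of `d₁`. It is half the bracket of `matA b` and `matP b c`, written in
terms of `matA b` and `matB c`. -/
noncomputable def halfLieAP : Matrix (Fin 2) (Fin 2) ℝ :=
  (b * c) • matA b + (1 - b ^ 2) • matB c

/-- The off-diagonal block of `d₂`. It is half the bracket of `matB c` and `matP b c`, written in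
terms of `matA b` and `matB c`. -/
noncomputable def halfLieBP : Matrix (Fin 2) (Fin 2) ℝ :=
  -((1 - c ^ 2) • matA b + (b * c) • matB c)

lemma lie_matA_matB : ⁅matA b, matB c⁆ = (2 : ℝ) • matP b c := by
  simp only [matA, matB, matP, add_lie, lie_add, smul_lie, lie_smul, lie_self, lie_matH_matT,
    lie_matH_matU, lie_matU_matT]
  module

lemma lie_matA_matP : ⁅matA b, matP b c⁆ = (2 : ℝ) • halfLieAP b c := by
  simp only [matA, matB, matP, halfLieAP, add_lie, lie_add, smul_lie, lie_smul, lie_self,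
    lie_matH_matT, lie_matH_matU, lie_matU_matT, lie_matU_matH]
  module

lemma lie_matB_matP : ⁅matB c, matP b c⁆ = (2 : ℝ) • halfLieBP b c := by
  simp only [matA, matB, matP, halfLieBP, add_lie, lie_add, smul_lie, lie_smul, lie_self,
    lie_matT_matH, lie_matT_matU, lie_matU_matT, lie_matU_matH]
  module

lemma lie_matP_matA : ⁅matP b c, matA b⁆ = (-2 : ℝ) • halfLieAP b c := by
  rw [← lie_skew, lie_matA_matP, neg_smul]

lemma lie_matP_matB : ⁅matP b c, matB c⁆ = (-2 : ℝ) • halfLieBP b c := by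
  rw [← lie_skew, lie_matB_matP, neg_smul]

lemma lie_matP_halfLieAP :
    ⁅matP b c, halfLieAP b c⁆ =
      (-2 * (b * c)) • halfLieAP b c + (-2 * (1 - b ^ 2)) • halfLieBP b c := by
  conv_lhs => rw [halfLieAP, lie_add, lie_smul, lie_smul, lie_matP_matA, lie_matP_matB]
  module

lemma lie_matP_halfLieBP :
    ⁅matP b c, halfLieBP b c⁆ =
      (2 * (1 - c ^ 2)) • halfLieAP b c + (2 * (b * c)) • halfLieBP b c := by
  conv_lhs => rw [halfLieBP, lie_neg, lie_add, lie_smul, lie_smul, lie_matP_matA, lie_matP_matB]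
  module

lemma trace_matP_mul_self : (matP b c * matP b c).trace = 2 * (b ^ 2 + c ^ 2 - 1) := by
  have hP : matP b c = !![b, 1 + c; -1 + c, -b] := by
    ext i j
    fin_cases i <;> fin_cases j <;> simp [matP, matH, matT, matU]
  rw [hP, Matrix.mul_fin_two, Matrix.trace_fin_two_of]
  ring

lemma generator₁_eq_blk : e₁ - c • e₆ + b • e₅ = blk 0 (-matP b c) := by
  simp only [e₁, e₅, e₆, blk_smul, blk_sub, blk_add, matP]
  congr 1 <;> module

lemma generator₂_eq_blk (k : ℝ) : e₂ + k • e₆ + b • e₄ = blk (matA b) (k • matT) := by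
  simp only [e₂, e₄, e₆, blk_smul, blk_add, matA]
  congr 1 <;> module

lemma generator₃_eq_blk (k : ℝ) : e₃ + k • e₅ + c • e₄ = blk (matB c) (-k • matH) := by
  simp only [e₃, e₄, e₅, blk_smul, blk_add, matB]
  congr 1 <;> module

lemma d₁_eq_blk : (1 - b ^ 2) • e₆ - c • e₁ - (c * b) • e₅ = blk 0 (halfLieAP b c) := by
  simp only [e₁, e₅, e₆, blk_smul, blk_sub, halfLieAP, matA, matB]
  congr 1 <;> module

lemma d₂_eq_blk : (1 - c ^ 2) • e₅ + b • e₁ - (c * b) • e₆ = blk 0 (halfLieBP b c) := by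
  simp only [e₁, e₅, e₆, blk_smul, blk_sub, blk_add, halfLieBP, matA, matB]
  congr 1 <;> module

lemma d₃_eq_blk (k : ℝ) :
    e₄ + c • e₃ + b • e₂ + (k * c) • e₅ + (b * k) • e₆ =
      blk (matP b c) (k • (b • matT - c • matH)) := by
  simp only [e₂, e₃, e₄, e₅, e₆, blk_smul, blk_add, matP]
  congr 1 <;> module

lemma span_lie_generators (k : ℝ) :
    Submodule.span ℝ (Set.image2 (fun x y => ⁅x, y⁆)
        (Submodule.span ℝ {blk 0 (-matP b c), blk (matA b) (k • matT),
          blk (matB c) (-k • matH)} : Set (Matrix (Fin 4) (Fin 4) ℝ))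
        (Submodule.span ℝ {blk 0 (-matP b c), blk (matA b) (k • matT),
          blk (matB c) (-k • matH)} : Set (Matrix (Fin 4) (Fin 4) ℝ))) =
      Submodule.span ℝ {blk 0 (halfLieAP b c), blk 0 (halfLieBP b c),
        blk (matP b c) (k • (b • matT - c • matH))} := by
  have h₁₂ : ⁅blk 0 (-matP b c), blk (matA b) (k • matT)⁆ =
      (2 : ℝ) • blk 0 (halfLieAP b c) := by
    rw [lie_blk_zero_left, neg_lie, lie_skew, lie_matA_matP, blk_smul, smul_zero]
  have h₁₃ : ⁅blk 0 (-matP b c), blk (matB c) (-k • matH)⁆ =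
      (2 : ℝ) • blk 0 (halfLieBP b c) := by
    rw [lie_blk_zero_left, neg_lie, lie_skew, lie_matB_matP, blk_smul, smul_zero]
  have h₂₃ : ⁅blk (matA b) (k • matT), blk (matB c) (-k • matH)⁆ =
      (2 : ℝ) • blk (matP b c) (k • (b • matT - c • matH)) := by
    rw [lie_blk, blk_smul, lie_matA_matB]
    congr 1
    simp only [matA, matB, add_lie, lie_add, smul_lie, lie_smul, lie_self, lie_matU_matH,
      lie_matT_matU]
    module
  rw [span_image2_lie_span_triple, h₁₂, h₁₃, h₂₃, ← Set.smul_set_singleton,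
    ← Set.smul_set_insert, ← Set.smul_set_insert,
    Submodule.span_smul_eq_of_isUnit _ _ (by norm_num)]

lemma lie_mem_span_halfLie {X : Matrix (Fin 2) (Fin 2) ℝ} {x y : Matrix (Fin 4) (Fin 4) ℝ}
    (hx : x ∈ Submodule.span ℝ {blk 0 (halfLieAP b c), blk 0 (halfLieBP b c), blk (matP b c) X})
    (hy : y ∈ Submodule.span ℝ {blk 0 (halfLieAP b c), blk 0 (halfLieBP b c)}) :
    ⁅x, y⁆ ∈ Submodule.span ℝ {blk 0 (halfLieAP b c), blk 0 (halfLieBP b c)} := by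
  have hzero (Y Z : Matrix (Fin 2) (Fin 2) ℝ) : ⁅blk 0 Y, blk 0 Z⁆ = 0 := by
    rw [lie_blk_zero_left, lie_zero, blk_zero]
  have hcomb (s t : ℝ) : blk 0 (s • halfLieAP b c + t • halfLieBP b c) ∈
      Submodule.span ℝ {blk 0 (halfLieAP b c), blk 0 (halfLieBP b c)} :=
    Submodule.mem_span_pair.2 ⟨s, t, by simp only [blk_smul, blk_add, smul_zero, add_zero]⟩
  refine lie_mem_of_mem_span ?_ hx hy
  rintro _ (rfl | rfl | rfl) _ (rfl | rfl)
  iterate 4 exact hzero _ _ ▸ zero_mem _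
  · exact lie_blk_zero_right _ _ _ ▸ lie_matP_halfLieAP b c ▸ hcomb _ _
  · exact lie_blk_zero_right _ _ _ ▸ lie_matP_halfLieBP b c ▸ hcomb _ _

end Generators

/-- for `m = span_ℝ {e₁ − c₃e₆ + b₃e₅, e₂ + c₂e₆ + b₃e₄, e₃ + c₂e₅ + c₃e₄}`,
one has `⁅m, m⁆ = span_ℝ {d₁, d₂, d₃}`, `span_ℝ {d₁, d₂}` is a Lie ideal of the subalgebra
`⁅m, m⁆`, and the Killing form value `trace (ad d₃ ∘ ad d₃)` on `g` is negative iff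
`b₃² + c₃² < 1`. -/
theorem stmt_16 (b₃ c₃ c₂ : ℝ)
    (m : Submodule ℝ (Matrix (Fin 4) (Fin 4) ℝ))
    (hm : m = Submodule.span ℝ {e₁ - c₃ • e₆ + b₃ • e₅, e₂ + c₂ • e₆ + b₃ • e₄,
      e₃ + c₂ • e₅ + c₃ • e₄})
    (d₁ d₂ : Matrix (Fin 4) (Fin 4) ℝ)
    (hd₁ : d₁ = (1 - b₃ ^ 2) • e₆ - c₃ • e₁ - (c₃ * b₃) • e₅)
    (hd₂ : d₂ = (1 - c₃ ^ 2) • e₅ + b₃ • e₁ - (c₃ * b₃) • e₆)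
    (d₃ : gLie)
    (hd₃ : (d₃ : Matrix (Fin 4) (Fin 4) ℝ) =
      e₄ + c₃ • e₃ + b₃ • e₂ + (c₂ * c₃) • e₅ + (b₃ * c₂) • e₆) :
    Submodule.span ℝ (Set.image2 (fun x y => ⁅x, y⁆) (m : Set (Matrix (Fin 4) (Fin 4) ℝ))
        (m : Set (Matrix (Fin 4) (Fin 4) ℝ))) =
      Submodule.span ℝ {d₁, d₂, (d₃ : Matrix (Fin 4) (Fin 4) ℝ)} ∧
    (∀ x ∈ Submodule.span ℝ (Set.image2 (fun x y => ⁅x, y⁆)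
        (m : Set (Matrix (Fin 4) (Fin 4) ℝ)) (m : Set (Matrix (Fin 4) (Fin 4) ℝ))),
      ∀ y ∈ Submodule.span ℝ {d₁, d₂}, ⁅x, y⁆ ∈ Submodule.span ℝ {d₁, d₂}) ∧
    (killingForm ℝ gLie d₃ d₃ < 0 ↔ b₃ ^ 2 + c₃ ^ 2 < 1) := by
  rw [generator₁_eq_blk, generator₂_eq_blk, generator₃_eq_blk] at hm
  rw [d₁_eq_blk] at hd₁
  rw [d₂_eq_blk] at hd₂
  rw [d₃_eq_blk] at hd₃
  have hspan := span_lie_generators b₃ c₃ c₂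
  rw [← hm, ← hd₁, ← hd₂, ← hd₃] at hspan
  refine ⟨hspan, fun x hx y hy => ?_, ?_⟩
  · rw [hspan, hd₃] at hx
    subst hd₁ hd₂
    exact lie_mem_span_halfLie b₃ c₃ hx hy
  · rw [killingForm_gLie, hd₃, topBlocks_blk, trace_matP_mul_self]
    constructor <;> intro h <;> linarith
end

section
/- Every 1-dimensional Lie subalgebra of the product Lie algebra sl₂(ℝ) × ℝ that contains no nonzero Lie ideal of sl₂(ℝ) × ℝ is mapped by some Lie algebra automorphism of sl₂(ℝ) × ℝ onto one of the six subalgebras span_ℝ{(Z, k)} with Z ∈ {H, T + U, U} and k ∈ {0, 1}. -/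
open Matrix

attribute [local instance 100] LieRing.ofAssociativeRing

/-- `T` as an element of `sl₂(ℝ)`. -/
def elT : sl2R :=
  ⟨!![0, 1; 1, 0], show (!![0, 1; 1, 0] : Matrix (Fin 2) (Fin 2) ℝ) ∈
      LinearMap.ker (Matrix.traceLinearMap (Fin 2) ℝ ℝ) from
    LinearMap.mem_ker.2 (by simp [Matrix.trace_fin_two])⟩

/-- `U` as an element of `sl₂(ℝ)`. -/
def elU : sl2R :=
  ⟨!![0, 1; -1, 0], show (!![0, 1; -1, 0] : Matrix (Fin 2) (Fin 2) ℝ) ∈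
      LinearMap.ker (Matrix.traceLinearMap (Fin 2) ℝ ℝ) from
    LinearMap.mem_ker.2 (by simp [Matrix.trace_fin_two])⟩

/-- `H` as an element of `sl₂(ℝ)`. -/
def elH : sl2R :=
  ⟨!![1, 0; 0, -1], show (!![1, 0; 0, -1] : Matrix (Fin 2) (Fin 2) ℝ) ∈
      LinearMap.ker (Matrix.traceLinearMap (Fin 2) ℝ ℝ) from
    LinearMap.mem_ker.2 (by simp [Matrix.trace_fin_two])⟩

/-!
A nonscalar `2 × 2` matrix `A` over a field has a cyclic vector, so it is similar to the companion
matrix of its characteristic polynomial. Hence nonzero traceless `2 × 2` matrices are classified up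
to conjugation by their determinant, and over `ℝ` the sign of the determinant decides which of
`H`, `T + U`, `U` such a matrix is conjugate to, up to a nonzero scalar. In `sl₂(ℝ) × ℝ`,
conjugation on the first factor and rescaling on the second are independent automorphisms, and a
line `ℝ(X, t)` has `X ≠ 0` because otherwise it would lie in the center and be an ideal.
-/

section ProductAndCenter

variable {R L L' M M' : Type*} [CommRing R] [LieRing L] [LieAlgebra R L] [LieRing L']
  [LieAlgebra R L'] [LieRing M] [LieAlgebra R M] [LieRing M'] [LieAlgebra R M']

theorem inf_center_eq_bot_of_forall_lieIdeal_le {N : Submodule R L}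
    (hN : ∀ I : LieIdeal R L, I.toSubmodule ≤ N → I = ⊥) :
    N ⊓ (LieAlgebra.center R L).toSubmodule = ⊥ := by
  let I : LieIdeal R L :=
    { N ⊓ (LieAlgebra.center R L).toSubmodule with
      lie_mem := fun {x m} hm => by
        have hxm : ⁅x, m⁆ = 0 := (LieModule.mem_maxTrivSubmodule R L L m).1 hm.2 x
        rw [hxm]
        exact Submodule.zero_mem _ }
  exact congrArg LieSubmodule.toSubmodule (hN I inf_le_left)

theorem zero_prodMk_mem_center [IsLieAbelian M] (t : M) :
    ((0 : L), t) ∈ LieAlgebra.center R (L × M) :=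
  (LieModule.mem_maxTrivSubmodule R (L × M) (L × M) _).2 fun x =>
    Prod.ext (lie_zero x.1) (trivial_lie_zero M M x.2 t)

/-- The product of two Lie algebra isomorphisms, acting componentwise. -/
def prodLieEquiv (e : L ≃ₗ⁅R⁆ L') (f : M ≃ₗ⁅R⁆ M') : (L × M) ≃ₗ⁅R⁆ (L' × M') :=
  { e.toLinearEquiv.prodCongr f.toLinearEquiv with
    map_lie' := fun {x y} => Prod.ext (e.map_lie x.1 y.1) (f.map_lie x.2 y.2) }

instance isLieAbelian_of_commRing (A : Type*) [CommRing A] : IsLieAbelian A :=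
  isMulCommutative_iff_isLieAbelian.1 inferInstance

/-- A linear isomorphism of abelian Lie algebras, regarded as an isomorphism of Lie algebras. -/
def lieEquivOfIsLieAbelian [IsLieAbelian L] [IsLieAbelian M] (e : L ≃ₗ[R] M) : L ≃ₗ⁅R⁆ M :=
  { e with
    map_lie' := fun {x y} =>
      (congrArg e (trivial_lie_zero L L x y)).trans
        ((map_zero e).trans (trivial_lie_zero M M (e x) (e y)).symm) }

end ProductAndCenter

section SpecialLinear

open LieAlgebra.SpecialLinear

variable {n R : Type*} [DecidableEq n] [Fintype n] [CommRing R]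

theorem mem_sl_iff_trace_eq_zero {A : Matrix n n R} : A ∈ sl n R ↔ A.trace = 0 :=
  LinearMap.mem_ker (f := traceLinearMap n R R)

theorem map_lieConj_sl (P : (Matrix n n R)ˣ) :
    (sl n R).map (P.val.lieConj P.invertible).toLieHom = sl n R := by
  ext A
  let e := P.val.lieConj P.invertible
  calc A ∈ (sl n R).map e.toLieHom
      ↔ e.symm A ∈ sl n R := Submodule.mem_map_equiv (e := e.toLinearEquiv) _
    _ ↔ (P⁻¹.val * A * P.val).trace = 0 := by
      rw [mem_sl_iff_trace_eq_zero, lieConj_symm_apply, coe_units_inv]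
    _ ↔ A ∈ sl n R := by rw [trace_units_conj', mem_sl_iff_trace_eq_zero]

/-- Conjugation `A ↦ P * A * P⁻¹` by an invertible matrix, as an automorphism of the Lie algebra of
traceless matrices. -/
noncomputable def slConj (P : (Matrix n n R)ˣ) : sl n R ≃ₗ⁅R⁆ sl n R :=
  (P.val.lieConj P.invertible).ofSubalgebras _ _ (map_lieConj_sl P)

theorem coe_slConj_apply (P : (Matrix n n R)ˣ) (A : sl n R) :
    (slConj P A : Matrix n n R) = P.val * A.val * P⁻¹.val := by
  rw [coe_units_inv]
  exact lieConj_apply _ _ _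

theorem exists_slConj_eq_of_isConj {A B : sl n R} (h : IsConj A.val B.val) :
    ∃ P : (Matrix n n R)ˣ, slConj P A = B := by
  obtain ⟨P, hP⟩ := h
  refine ⟨P, Subtype.ext ?_⟩
  rw [coe_slConj_apply, hP.eq, Units.mul_inv_cancel_right]

end SpecialLinear

section FinTwo

variable {R K : Type*} [CommRing R] [Field K]

/-- The matrix with columns `v` and `A v`. It is invertible exactly when `v` is a cyclic vector for
`A`. -/
def krylovMatrix (A : Matrix (Fin 2) (Fin 2) R) (v : Fin 2 → R) :
    Matrix (Fin 2) (Fin 2) R :=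
  (of ![v, A *ᵥ v])ᵀ

theorem mul_krylovMatrix (A : Matrix (Fin 2) (Fin 2) R) (v : Fin 2 → R) :
    A * krylovMatrix A v = krylovMatrix A v * !![0, -A.det; 1, A.trace] := by
  -- The second column is Cayley–Hamilton: `A (A v) = -det A • v + tr A • A v`.
  ext i j
  fin_cases i <;> fin_cases j <;>
    simp [krylovMatrix, mul_apply, Fin.sum_univ_two, det_fin_two, trace_fin_two] <;> ring

theorem exists_det_krylovMatrix_ne_zero {A : Matrix (Fin 2) (Fin 2) R}
    (hA : A ∉ Set.range (scalar (Fin 2))) : ∃ v, (krylovMatrix A v).det ≠ 0 := by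
  by_contra! h
  have h₁₀ : A 1 0 = 0 := by
    simpa [krylovMatrix, det_fin_two, mulVec, dotProduct] using h ![1, 0]
  have h₀₁ : A 0 1 = 0 := by
    simpa [krylovMatrix, det_fin_two, mulVec, dotProduct] using h ![0, 1]
  have h₁₁ : A 1 1 = A 0 0 := by
    simpa [krylovMatrix, det_fin_two, mulVec, dotProduct, h₁₀, h₀₁, sub_eq_zero] using h ![1, 1]
  refine hA ⟨A 0 0, ?_⟩
  ext i j
  fin_cases i <;> fin_cases j <;> simp [h₁₀, h₀₁, h₁₁]

theorem isConj_companion_of_notMem_range_scalar {A : Matrix (Fin 2) (Fin 2) K}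
    (hA : A ∉ Set.range (scalar (Fin 2))) : IsConj A !![0, -A.det; 1, A.trace] := by
  obtain ⟨v, hv⟩ := exists_det_krylovMatrix_ne_zero hA
  obtain ⟨P, hP⟩ := (isUnit_iff_isUnit_det (krylovMatrix A v)).2 hv.isUnit
  refine IsConj.symm ⟨P, ?_⟩
  rw [SemiconjBy, hP, mul_krylovMatrix]

theorem isConj_of_trace_eq_of_det_eq {A B : Matrix (Fin 2) (Fin 2) K}
    (hA : A ∉ Set.range (scalar (Fin 2))) (hB : B ∉ Set.range (scalar (Fin 2)))
    (htrace : A.trace = B.trace) (hdet : A.det = B.det) : IsConj A B := by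
  have hB' := isConj_companion_of_notMem_range_scalar hB
  rw [← htrace, ← hdet] at hB'
  exact (isConj_companion_of_notMem_range_scalar hA).trans hB'.symm

theorem notMem_range_scalar_of_mem_sl [NeZero (2 : K)] {A : Matrix (Fin 2) (Fin 2) K}
    (hA : A ∈ LieAlgebra.SpecialLinear.sl (Fin 2) K) (hA0 : A ≠ 0) :
    A ∉ Set.range (scalar (Fin 2)) := by
  rintro ⟨a, rfl⟩
  have ha : 2 * a = 0 := by
    simpa [two_mul, trace_fin_two] using mem_sl_iff_trace_eq_zero.1 hA
  have ha0 : a = 0 := (mul_eq_zero.1 ha).resolve_left two_ne_zero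
  exact hA0 (by rw [ha0, map_zero])

theorem exists_slConj_eq_of_det_eq [NeZero (2 : K)]
    {A B : LieAlgebra.SpecialLinear.sl (Fin 2) K} (hA : A ≠ 0) (hB : B ≠ 0)
    (hdet : A.val.det = B.val.det) : ∃ P, slConj P A = B := by
  refine exists_slConj_eq_of_isConj (isConj_of_trace_eq_of_det_eq ?_ ?_ ?_ hdet)
  · exact notMem_range_scalar_of_mem_sl A.2 (Subtype.coe_ne_coe.2 hA)
  · exact notMem_range_scalar_of_mem_sl B.2 (Subtype.coe_ne_coe.2 hB)
  · rw [mem_sl_iff_trace_eq_zero.1 A.2, mem_sl_iff_trace_eq_zero.1 B.2]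

end FinTwo

theorem det_elH : elH.val.det = -1 := by simp [elH, det_fin_two]

theorem det_elU : elU.val.det = 1 := by simp [elU, det_fin_two]

theorem det_elT_add_elU : (elT + elU).val.det = 0 := by simp [elT, elU, det_fin_two]

theorem elT_add_elU_ne_zero : elT + elU ≠ 0 := fun h => by
  simpa [elT, elU] using congrFun (congrFun (congrArg Subtype.val h) 0) 1

theorem exists_slConj_eq_smul_of_det_mul_det_pos {X Z : sl2R}
    (h : 0 < X.val.det * Z.val.det) : ∃ P, ∃ l : ℝ, l ≠ 0 ∧ slConj P X = l • Z := by
  have hX : X ≠ 0 := by rintro rfl; simp at h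
  have hZ : Z ≠ 0 := by rintro rfl; simp at h
  have hZdet : Z.val.det ≠ 0 := right_ne_zero_of_mul h.ne'
  have hratio : 0 < X.val.det / Z.val.det := div_pos_iff.2 (mul_pos_iff.1 h)
  have hl : √(X.val.det / Z.val.det) ≠ 0 := (Real.sqrt_pos.2 hratio).ne'
  have hdet : X.val.det = (√(X.val.det / Z.val.det) • Z).val.det := by
    simp [Real.sq_sqrt hratio.le, hZdet]
  obtain ⟨P, hP⟩ := exists_slConj_eq_of_det_eq hX (smul_ne_zero hl hZ) hdet
  exact ⟨P, _, hl, hP⟩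

theorem exists_slConj_eq_smul_normalForm {X : sl2R} (hX : X ≠ 0) :
    ∃ P, ∃ Z ∈ ({elH, elT + elU, elU} : Set sl2R), ∃ l : ℝ, l ≠ 0 ∧ slConj P X = l • Z := by
  rcases lt_trichotomy X.val.det 0 with hneg | hzero | hpos
  · obtain ⟨P, l, hl, hP⟩ := exists_slConj_eq_smul_of_det_mul_det_pos (X := X) (Z := elH)
      (by rw [det_elH]; linarith)
    exact ⟨P, elH, by simp, l, hl, hP⟩
  · obtain ⟨P, hP⟩ := exists_slConj_eq_of_det_eq hX elT_add_elU_ne_zero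
      (hzero.trans det_elT_add_elU.symm)
    exact ⟨P, elT + elU, by simp, 1, one_ne_zero, by rw [hP, one_smul]⟩
  · obtain ⟨P, l, hl, hP⟩ := exists_slConj_eq_smul_of_det_mul_det_pos (X := X) (Z := elU)
      (by rw [det_elU]; linarith)
    exact ⟨P, elU, by simp, l, hl, hP⟩

theorem exists_mul_eq_mul_zero_or_one {K : Type*} [Field K] {l : K} (hl : l ≠ 0) (t : K) :
    ∃ k ∈ ({0, 1} : Set K), ∃ m, m ≠ 0 ∧ m * t = l * k := by
  by_cases ht : t = 0
  · exact ⟨0, by simp, 1, one_ne_zero, by simp [ht]⟩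
  · exact ⟨1, by simp, l / t, div_ne_zero hl ht, by field_simp⟩

theorem exists_lieEquiv_apply_eq_smul_normalForm {X : sl2R} (hX : X ≠ 0) (t : ℝ) :
    ∃ φ : (sl2R × ℝ) ≃ₗ⁅ℝ⁆ (sl2R × ℝ), ∃ Z ∈ ({elH, elT + elU, elU} : Set sl2R),
      ∃ k ∈ ({0, 1} : Set ℝ), ∃ l : ℝ, l ≠ 0 ∧ φ (X, t) = l • (Z, k) := by
  obtain ⟨P, Z, hZ, l, hl, hP⟩ := exists_slConj_eq_smul_normalForm hX
  obtain ⟨k, hk, m, hm, hmt⟩ := exists_mul_eq_mul_zero_or_one hl t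
  exact ⟨prodLieEquiv (slConj P) (lieEquivOfIsLieAbelian (LinearEquiv.smulOfNeZero ℝ ℝ m hm)),
    Z, hZ, k, hk, l, hl, Prod.ext hP hmt⟩

/-- every 1-dimensional Lie subalgebra of `sl₂(ℝ) × ℝ` containing no nonzero
Lie ideal of `sl₂(ℝ) × ℝ` is carried by some Lie algebra automorphism of `sl₂(ℝ) × ℝ` onto
one of the six subalgebras `span_ℝ {(Z, k)}` with `Z ∈ {H, T + U, U}` and `k ∈ {0, 1}`. -/
theorem stmt_19 (h : LieSubalgebra ℝ (sl2R × ℝ))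
    (hdim : Module.finrank ℝ h = 1)
    (hnoideal : ∀ I : LieIdeal ℝ (sl2R × ℝ),
      I.toSubmodule ≤ h.toSubmodule → I = ⊥) :
    ∃ φ : (sl2R × ℝ) ≃ₗ⁅ℝ⁆ (sl2R × ℝ),
      ∃ Z ∈ ({elH, elT + elU, elU} : Set sl2R), ∃ k ∈ ({0, 1} : Set ℝ),
        Submodule.map φ.toLieHom.toLinearMap h.toSubmodule =
          Submodule.span ℝ {(Z, k)} := by
  obtain ⟨⟨X, t⟩, hspan⟩ := (Submodule.finrank_le_one_iff_isPrincipal h.toSubmodule).1 hdim.le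
  have hX : X ≠ 0 := by
    rintro rfl
    have hmem : ((0 : sl2R), t) ∈
        h.toSubmodule ⊓ (LieAlgebra.center ℝ (sl2R × ℝ)).toSubmodule :=
      ⟨hspan ▸ Submodule.mem_span_singleton_self _, zero_prodMk_mem_center t⟩
    rw [inf_center_eq_bot_of_forall_lieIdeal_le hnoideal, Submodule.mem_bot] at hmem
    rw [hmem, Submodule.span_zero_singleton] at hspan
    exact zero_ne_one ((Submodule.finrank_eq_zero.2 hspan).symm.trans hdim)
  obtain ⟨φ, Z, hZ, k, hk, l, hl, hφ⟩ := exists_lieEquiv_apply_eq_smul_normalForm hX t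
  refine ⟨φ, Z, hZ, k, hk, ?_⟩
  calc Submodule.map φ.toLieHom.toLinearMap h.toSubmodule
      = Submodule.span ℝ {φ (X, t)} := by
        rw [hspan, Submodule.map_span, Set.image_singleton]; rfl
    _ = Submodule.span ℝ {(Z, k)} := by
        rw [hφ, Submodule.span_singleton_smul_eq hl.isUnit]
end
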